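/- arXiv:1812.10147 — 2 statements merged into one kernel-verified Lean document; each statement's English description precedes it below -/
import Mathlib

section
/- In the regime switching model, for any n ≥ 1 and any 0 ≤ r ≤ n−1: P{𝓛_n = r} ≤ P{L_n = r} · sup_{a∈A} Σ_{k=1}^∞ p_{a,k}^{1+r} + inf_{0≤ε≤1} { a^{n,r}(ε) + b^{n,r}(ε) }, where a^{n,r}(ε) = c(r) E[ 1{L_n > r} ν(X_{n+1}, ε)/L_n ] and b^{n,r}(ε) = 2^{1+r} ∫_0^ε u^r E[ 1{L_n > r} ν(X_{n+1}, u/2) C(L_n, r) (1 − u/2)^{L_n − r} ] du, with c(0) = e^{−1} and c(r) = e(1+r)/√π for r ≥ 1. -/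
open MeasureTheory ENNReal Finset

/-- The constant `c(r)`: `c(0) = e⁻¹` and `c(r) = e(1+r)/√π` for `r ≥ 1`. -/
noncomputable def cDGP (r : ℕ) : ℝ≥0∞ :=
  if r = 0 then ENNReal.ofReal (Real.exp (-1))
  else ENNReal.ofReal (Real.exp 1 * (1 + r) / Real.sqrt Real.pi)

open scoped Classical in
/-- The counting function `ν(a, ε) = Σ_k 1{p_{a,k} ≥ ε}` of the family `p`. -/
noncomputable def nuCount {A : Type*} (p : A → ℕ → ℝ≥0∞) (a : A) (ε : ℝ) : ℝ≥0∞ :=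
  ∑' k, if ENNReal.ofReal ε ≤ p a k then 1 else 0

/-!
Given the regimes `X_1, …, X_{n+1}`, the labels `K_1, …, K_{n+1}` are independent with laws
`P_{X_i}`. Hence, conditionally on the regimes, `K_{n+1} = j` has probability `q = p_{X_{n+1}, j}`
and, given `j`, the count `𝓛_n` is binomial with parameters `L_n` and `q`, so that
`P{𝓛_n = r} = E[Σ_j p_{X_{n+1}, j} C(L_n, r) p_{X_{n+1}, j}^r (1 - p_{X_{n+1}, j})^(L_n - r)]`.

The sum inside the expectation vanishes when `L_n < r` and is `Σ_j p_{X_{n+1}, j}^(1 + r)` when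
`L_n = r`. When `L_n = m > r`, an atom `q ≥ ε` contributes at most `c(r) / m`, because
`m q C(m, r) q^r (1 - q)^(m - r) ≤ c(r)`; an atom `q < ε` is charged to the part `q/2 < u ≤ q` of
the integral over `u`, where `ν(u/2)` counts it.

The process `Z` is not assumed measurable, but its path up to time `n + 1` takes countably many
values and the probabilities of these values sum to `1`, which forces it to be a.e. measurable.
-/

/-- The binomial probability mass `C(m, r) q^r (1 - q)^(m - r)`, for a success probability `q ≤ 1`.
It takes values in `ℝ≥0∞` so that it can serve as a weight without conversions, and vanishes for
`m < r`. -/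
noncomputable def binomialMass (m r : ℕ) (q : ℝ≥0∞) : ℝ≥0∞ :=
  m.choose r * q ^ r * (1 - q) ^ (m - r)

lemma binomialMass_self (m : ℕ) (q : ℝ≥0∞) : binomialMass m m q = q ^ m := by
  simp [binomialMass]

lemma binomialMass_eq_zero_of_lt {m r : ℕ} (h : m < r) (q : ℝ≥0∞) : binomialMass m r q = 0 := by
  simp [binomialMass, Nat.choose_eq_zero_of_lt h]

lemma binomialMass_le_one (m r : ℕ) {q : ℝ≥0∞} (hq : q ≤ 1) : binomialMass m r q ≤ 1 := by
  rcases lt_or_ge m r with h | h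
  · simp [binomialMass_eq_zero_of_lt h]
  calc binomialMass m r q = q ^ r * (1 - q) ^ (m - r) * m.choose r := by rw [binomialMass]; ring
    _ ≤ ∑ i ∈ range (m + 1), q ^ i * (1 - q) ^ (m - i) * m.choose i :=
      single_le_sum (f := fun i ↦ q ^ i * (1 - q) ^ (m - i) * (m.choose i : ℝ≥0∞))
        (fun _ _ ↦ zero_le) (mem_range_succ_iff.2 h)
    _ = 1 := by rw [← add_pow, add_tsub_cancel_of_le hq, one_pow]

lemma add_one_mul_mul_binomialMass (m r : ℕ) (q : ℝ≥0∞) :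
    (m + 1) * (q * binomialMass m r q) = (r + 1) * binomialMass (m + 1) (r + 1) q := by
  have hchoose : ((m : ℝ≥0∞) + 1) * m.choose r = (m + 1).choose (r + 1) * (r + 1) := by
    exact_mod_cast Nat.add_one_mul_choose_eq m r
  calc (m + 1) * (q * binomialMass m r q)
      = ((m + 1) * m.choose r) * (q ^ (r + 1) * (1 - q) ^ (m - r)) := by rw [binomialMass]; ring
    _ = (r + 1) * binomialMass (m + 1) (r + 1) q := by
      rw [hchoose, binomialMass, Nat.add_sub_add_right]; ring

lemma mul_mul_one_sub_pow_le_exp_neg_one (m : ℕ) {q : ℝ} (hq₀ : 0 ≤ q) (hq₁ : q ≤ 1) :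
    m * (q * (1 - q) ^ m) ≤ Real.exp (-1) := by
  have hpow : (1 - q) ^ m ≤ Real.exp (-(m * q)) := by
    rw [← mul_neg, Real.exp_nat_mul]
    exact pow_le_pow_left₀ (sub_nonneg.2 hq₁) (Real.one_sub_le_exp_neg q) m
  calc m * (q * (1 - q) ^ m) = m * q * (1 - q) ^ m := by ring
    _ ≤ m * q * Real.exp (-(m * q)) := by gcongr
    _ ≤ Real.exp (-1) := Real.mul_exp_neg_le_exp_neg_one _

lemma mul_mul_binomialMass_zero_le (m : ℕ) {q : ℝ≥0∞} (hq : q ≤ 1) :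
    m * (q * binomialMass m 0 q) ≤ ENNReal.ofReal (Real.exp (-1)) := by
  lift q to NNReal using ne_top_of_le_ne_top one_ne_top hq
  have hq₁ : (q : ℝ) ≤ 1 := by exact_mod_cast hq
  have hmass : m * (q * binomialMass m 0 q) = ENNReal.ofReal (m * (q * (1 - q) ^ m)) := by
    rw [ofReal_mul (by positivity), ofReal_mul (by positivity), ofReal_pow (by linarith),
      ofReal_sub _ (by positivity)]
    simp [binomialMass]
  rw [hmass]
  exact ofReal_le_ofReal (mul_mul_one_sub_pow_le_exp_neg_one m q.2 hq₁)

lemma add_one_le_cDGP {r : ℕ} (hr : r ≠ 0) : (r : ℝ≥0∞) + 1 ≤ cDGP r := by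
  have hsqrt : √Real.pi ≤ Real.exp 1 :=
    calc √Real.pi ≤ 2 := Real.sqrt_le_left (by norm_num) |>.2 (by linarith [Real.pi_le_four])
      _ ≤ Real.exp 1 := by linarith [Real.add_one_le_exp (1 : ℝ)]
  calc (r : ℝ≥0∞) + 1 = ENNReal.ofReal (1 + r) := by
        rw [ofReal_add zero_le_one r.cast_nonneg, ofReal_one, ofReal_natCast, add_comm]
    _ ≤ cDGP r := by
      rw [cDGP, if_neg hr]
      refine ofReal_le_ofReal ((le_div_iff₀ (by positivity)).2 ?_)
      rw [mul_comm]
      gcongr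

lemma mul_mul_binomialMass_le_cDGP (m r : ℕ) {q : ℝ≥0∞} (hq : q ≤ 1) :
    m * (q * binomialMass m r q) ≤ cDGP r := by
  rcases eq_or_ne r 0 with rfl | hr
  · simpa [cDGP] using mul_mul_binomialMass_zero_le m hq
  calc m * (q * binomialMass m r q) ≤ (m + 1) * (q * binomialMass m r q) := by
        gcongr; exact le_self_add
    _ = (r + 1) * binomialMass (m + 1) (r + 1) q := add_one_mul_mul_binomialMass m r q
    _ ≤ (r + 1) * 1 := by gcongr; exact binomialMass_le_one _ _ hq
    _ ≤ cDGP r := by rw [mul_one]; exact add_one_le_cDGP hr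

/-- The integrand `1{m > r} ν(a, ε) / m` of `a^{n,r}(ε)`, with `m` for `L_n` and `a` for
`X_{n+1}`. -/
noncomputable def countingTerm {A : Type*} (p : A → ℕ → ℝ≥0∞) (r m : ℕ) (a : A) (ε : ℝ) : ℝ≥0∞ :=
  if r < m then nuCount p a ε / m else 0

/-- The integrand `1{m > r} ν(a, u/2) C(m, r) (1 - u/2)^(m - r)` of the inner expectation in
`b^{n,r}(ε)`, with `m` for `L_n` and `a` for `X_{n+1}`. -/
noncomputable def tailTerm {A : Type*} (p : A → ℕ → ℝ≥0∞) (r m : ℕ) (a : A) (u : ℝ) : ℝ≥0∞ :=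
  if r < m then nuCount p a (u / 2) * m.choose r * ENNReal.ofReal (1 - u / 2) ^ (m - r) else 0

lemma measurable_nuCount {A : Type*} (p : A → ℕ → ℝ≥0∞) (a : A) : Measurable (nuCount p a) :=
  Measurable.tsum fun _ ↦ Measurable.ite (measurableSet_le (by fun_prop) measurable_const)
    measurable_const measurable_const

lemma measurable_tailTerm {A : Type*} (p : A → ℕ → ℝ≥0∞) (r m : ℕ) (a : A) :
    Measurable (tailTerm p r m a) := by
  have hν : Measurable fun u : ℝ ↦ nuCount p a (u / 2) :=
    (measurable_nuCount p a).comp (by fun_prop)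
  unfold tailTerm
  split_ifs <;> fun_prop

open scoped Classical in
lemma mul_binomialMass_le_lintegral (r m : ℕ) {q : ℝ≥0∞} (hq : q ≤ 1) {ε : ℝ}
    (hqε : q < ENNReal.ofReal ε) :
    q * binomialMass m r q ≤ 2 ^ (r + 1) * ∫⁻ u in Set.Ioc 0 ε, ENNReal.ofReal u ^ r *
      ((if ENNReal.ofReal (u / 2) ≤ q then 1 else 0) * m.choose r *
        ENNReal.ofReal (1 - u / 2) ^ (m - r)) := by
  obtain ⟨t, ht, rfl⟩ : ∃ t : ℝ, 0 ≤ t ∧ q = ENNReal.ofReal t :=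
    ⟨q.toReal, toReal_nonneg, (ofReal_toReal (ne_top_of_le_ne_top one_ne_top hq)).symm⟩
  have htε : t < ε := (ofReal_lt_ofReal_iff_of_nonneg ht).1 hqε
  have hsub : 1 - ENNReal.ofReal t = ENNReal.ofReal (1 - t) := by rw [ofReal_sub _ ht, ofReal_one]
  have htwo : ENNReal.ofReal t = 2 * ENNReal.ofReal (t / 2) := by
    rw [← ofReal_ofNat, ← ofReal_mul zero_le_two, mul_div_cancel₀ t two_ne_zero]
  -- Only `u ∈ (q/2, q]` matters: there the integrand is at least `(q/2)^r C(m, r) (1 - q)^(m - r)`.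
  calc ENNReal.ofReal t * binomialMass m r (ENNReal.ofReal t)
      = 2 ^ (r + 1) * ∫⁻ _ in Set.Ioc (t / 2) t, ENNReal.ofReal (t / 2) ^ r *
          (1 * m.choose r * ENNReal.ofReal (1 - t) ^ (m - r)) := by
        rw [setLIntegral_const, Real.volume_Ioc, show t - t / 2 = t / 2 by ring, binomialMass,
          hsub, htwo]
        ring
    _ ≤ 2 ^ (r + 1) * ∫⁻ u in Set.Ioc (t / 2) t, ENNReal.ofReal u ^ r *
          ((if ENNReal.ofReal (u / 2) ≤ ENNReal.ofReal t then 1 else 0) * m.choose r *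
            ENNReal.ofReal (1 - u / 2) ^ (m - r)) := by
        refine mul_le_mul_right (setLIntegral_mono' measurableSet_Ioc fun u hu ↦ ?_) _
        rw [if_pos (ofReal_le_ofReal (by linarith [hu.1, hu.2]))]
        gcongr
        · exact hu.1.le
        · linarith [hu.1, hu.2]
    _ ≤ _ := by gcongr; positivity

section SingleDistribution

variable {A : Type*} {p : A → ℕ → ℝ≥0∞} {a : A} {r m : ℕ}

lemma mul_countingTerm_eq_tsum (hrm : r < m) (ε : ℝ) [∀ k, Decidable (ENNReal.ofReal ε ≤ p a k)] :
    cDGP r * countingTerm p r m a ε =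
      ∑' k, cDGP r / m * (if ENNReal.ofReal ε ≤ p a k then 1 else 0) := by
  rw [ENNReal.tsum_mul_left, countingTerm, if_pos hrm, nuCount, div_eq_mul_inv, div_eq_mul_inv,
    mul_assoc, mul_comm (_)⁻¹]
  congr!

open scoped Classical in
lemma mul_lintegral_tailTerm_eq_tsum (hrm : r < m) (ε : ℝ) :
    2 ^ (r + 1) * ∫⁻ u in Set.Ioc 0 ε, ENNReal.ofReal u ^ r * tailTerm p r m a u =
      ∑' k, 2 ^ (r + 1) * ∫⁻ u in Set.Ioc 0 ε, ENNReal.ofReal u ^ r *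
        ((if ENNReal.ofReal (u / 2) ≤ p a k then 1 else 0) * m.choose r *
          ENNReal.ofReal (1 - u / 2) ^ (m - r)) := by
  have hmeas (k : ℕ) : Measurable fun u : ℝ ↦ ENNReal.ofReal u ^ r *
      ((if ENNReal.ofReal (u / 2) ≤ p a k then (1 : ℝ≥0∞) else 0) * m.choose r *
        ENNReal.ofReal (1 - u / 2) ^ (m - r)) := by
    have hset : MeasurableSet {u : ℝ | ENNReal.ofReal (u / 2) ≤ p a k} :=
      measurableSet_le (by fun_prop) measurable_const
    exact .mul (by fun_prop) <|
      ((Measurable.ite hset measurable_const measurable_const).mul_const _).mul (by fun_prop)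
  rw [ENNReal.tsum_mul_left, ← lintegral_tsum fun k ↦ (hmeas k).aemeasurable]
  simp only [ENNReal.tsum_mul_left, ENNReal.tsum_mul_right, tailTerm, if_pos hrm, nuCount]

lemma tsum_mul_binomialMass_le_of_lt (hp : ∑' k, p a k = 1) (hrm : r < m) (ε : ℝ) :
    ∑' k, p a k * binomialMass m r (p a k) ≤ cDGP r * countingTerm p r m a ε +
      2 ^ (r + 1) * ∫⁻ u in Set.Ioc 0 ε, ENNReal.ofReal u ^ r * tailTerm p r m a u := by
  classical
  have hp₁ (k : ℕ) : p a k ≤ 1 := hp ▸ ENNReal.le_tsum k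
  have hm : (m : ℝ≥0∞) ≠ 0 := Nat.cast_ne_zero.2 (Nat.ne_zero_of_lt hrm)
  rw [mul_countingTerm_eq_tsum hrm, mul_lintegral_tailTerm_eq_tsum hrm, ← ENNReal.tsum_add]
  refine ENNReal.tsum_le_tsum fun k ↦ ?_
  rcases le_or_gt (ENNReal.ofReal ε) (p a k) with h | h
  · rw [if_pos h, mul_one]
    refine le_add_right ((ENNReal.le_div_iff_mul_le (.inl hm) (.inl (natCast_ne_top m))).2 ?_)
    rw [mul_comm]
    exact mul_mul_binomialMass_le_cDGP m r (hp₁ k)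
  · exact le_add_left (mul_binomialMass_le_lintegral r m (hp₁ k) h)

lemma tsum_mul_binomialMass_le (hp : ∑' k, p a k = 1) (r m : ℕ) (ε : ℝ) :
    ∑' k, p a k * binomialMass m r (p a k) ≤
      (if m = r then ⨆ a, ∑' k, p a k ^ (r + 1) else 0) + (cDGP r * countingTerm p r m a ε +
        2 ^ (r + 1) * ∫⁻ u in Set.Ioc 0 ε, ENNReal.ofReal u ^ r * tailTerm p r m a u) := by
  rcases lt_trichotomy m r with h | rfl | h
  · simp [binomialMass_eq_zero_of_lt h]
  · simp only [binomialMass_self, ← pow_succ', if_true]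
    exact le_add_right (le_iSup (fun a ↦ ∑' k, p a k ^ (m + 1)) a)
  · exact le_add_left (tsum_mul_binomialMass_le_of_lt hp h ε)

end SingleDistribution

lemma tsum_fin_succ_eq_tsum_snoc {S : Type*} {n : ℕ} (g : (Fin (n + 1) → S) → ℝ≥0∞) :
    ∑' x, g x = ∑' b, ∑' x : Fin n → S, g (Fin.snoc x b) := by
  rw [← (Fin.snocEquiv fun _ ↦ S).tsum_eq, ENNReal.tsum_prod']
  rfl

lemma tsum_prod_eq_prod_tsum {S : Type*} {n : ℕ} (f : Fin n → S → ℝ≥0∞) :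
    ∑' x : Fin n → S, ∏ i, f i (x i) = ∏ i, ∑' s, f i s := by
  induction n with
  | zero => simp
  | succ n ih =>
    simp only [tsum_fin_succ_eq_tsum_snoc, Fin.prod_univ_castSucc, Fin.snoc_castSucc,
      Fin.snoc_last, ENNReal.tsum_mul_right, ENNReal.tsum_mul_left, ih]

lemma tsum_prod_apply_eq_one {A S : Type*} {p : A → S → ℝ≥0∞} (hp : ∀ a, ∑' s, p a s = 1) {n : ℕ}
    (x : Fin n → A) : ∑' k : Fin n → S, ∏ i, p (x i) (k i) = 1 := by
  simp only [tsum_prod_eq_prod_tsum fun i ↦ p (x i), hp, prod_const_one]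

/- A kernel `κ n` reads an infinite path, so the finite path `x` is padded by an arbitrary `c`. -/
lemma tsum_prod_extend_eq_one {S : Type*} {κ : ℕ → (ℕ → S) → S → ℝ≥0∞}
    (hκdep : ∀ n (s s' : ℕ → S), (∀ i < n, s i = s' i) → κ n s = κ n s')
    (hκsum : ∀ n s, ∑' b, κ n s b = 1) (c : ℕ → S) (n : ℕ) :
    ∑' x : Fin n → S, ∏ i : Fin n, κ i (Function.extend Fin.val x c) (x i) = 1 := by
  induction n with
  | zero => simp
  | succ n ih =>
    have hsnoc (x : Fin n → S) (b : S) {i : ℕ} (hi : i ≤ n) :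
        κ i (Function.extend Fin.val (Fin.snoc x b : Fin (n + 1) → S) c) =
          κ i (Function.extend Fin.val x c) := by
      refine hκdep i _ _ fun j hj ↦ ?_
      lift j to Fin n using hj.trans_le hi
      rw [Fin.val_injective.extend_apply, ← Fin.val_castSucc, Fin.val_injective.extend_apply,
        Fin.snoc_castSucc (α := fun _ ↦ S)]
    rw [tsum_fin_succ_eq_tsum_snoc, ENNReal.tsum_comm]
    simp only [Fin.prod_univ_castSucc, Fin.snoc_castSucc, Fin.snoc_last, Fin.val_castSucc,
      Fin.val_last, hsnoc, le_refl, Fin.is_le', ENNReal.tsum_mul_left, hκsum, mul_one, ih]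

lemma tsum_ite_eq_zero_eq_one_sub {S : Type*} [DecidableEq S] {f : S → ℝ≥0∞}
    (hf : ∑' s, f s = 1) (j : S) : ∑' s, (if s = j then 0 else f s) = 1 - f j := by
  refine ENNReal.eq_sub_of_add_eq' one_ne_top ?_
  have hadd := ENNReal.tsum_eq_add_tsum_ite (f := f) j
  rw [hf, add_comm] at hadd
  convert hadd.symm

lemma tsum_prod_mul_ite_filter_eq {S : Type*} [DecidableEq S] {n : ℕ} {f : Fin n → S → ℝ≥0∞}
    (hf : ∀ i, ∑' s, f i s = 1) {I T : Finset (Fin n)} (hT : T ⊆ I) {j : S} {q : ℝ≥0∞}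
    (hq : ∀ i ∈ I, f i j = q) :
    ∑' k : Fin n → S, (∏ i, f i (k i)) * (if {i ∈ I | k i = j} = T then 1 else 0) =
      q ^ #T * (1 - q) ^ (#I - #T) := by
  let g (i : Fin n) (s : S) : ℝ≥0∞ :=
    if i ∈ T then if s = j then 1 else 0 else if i ∈ I then if s = j then 0 else 1 else 1
  have hg (k : Fin n → S) : (if {i ∈ I | k i = j} = T then 1 else 0) = ∏ i, g i (k i) := by
    split_ifs with h
    · subst h
      exact (prod_eq_one fun i _ ↦ by grind).symm
    · obtain ⟨i, hi⟩ : ∃ i, ¬ (i ∈ ({i ∈ I | k i = j} : Finset _) ↔ i ∈ T) := by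
        simpa [Finset.ext_iff] using h
      exact (prod_eq_zero (mem_univ i) (by grind)).symm
  have hfg (i : Fin n) : ∑' s, f i s * g i s =
      (if i ∈ T then q else 1) * if i ∈ I \ T then 1 - q else 1 := by
    by_cases hiT : i ∈ T
    · simp [g, hiT, hq i (hT hiT)]
    · by_cases hiI : i ∈ I
      · simp [g, hiT, hiI, tsum_ite_eq_zero_eq_one_sub (hf i), hq i hiI]
      · simp [g, hiT, hiI, hf i]
  simp only [hg, ← prod_mul_distrib, tsum_prod_eq_prod_tsum fun i s ↦ f i s * g i s, hfg]
  rw [prod_mul_distrib, Fintype.prod_ite_mem, Fintype.prod_ite_mem, prod_const, prod_const,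
    card_sdiff_of_subset hT]

lemma tsum_prod_mul_ite_card_filter_eq {S : Type*} [DecidableEq S] {n : ℕ} {f : Fin n → S → ℝ≥0∞}
    (hf : ∀ i, ∑' s, f i s = 1) {I : Finset (Fin n)} {j : S} {q : ℝ≥0∞}
    (hq : ∀ i ∈ I, f i j = q) (r : ℕ) :
    ∑' k : Fin n → S, (∏ i, f i (k i)) * (if #{i ∈ I | k i = j} = r then 1 else 0) =
      binomialMass #I r q := by
  have hpartition (k : Fin n → S) : (if #{i ∈ I | k i = j} = r then (1 : ℝ≥0∞) else 0) =
      ∑ T ∈ I.powersetCard r, if {i ∈ I | k i = j} = T then 1 else 0 := by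
    simp [mem_powersetCard]
  calc ∑' k : Fin n → S, (∏ i, f i (k i)) * (if #{i ∈ I | k i = j} = r then 1 else 0)
      = ∑ T ∈ I.powersetCard r, ∑' k : Fin n → S,
          (∏ i, f i (k i)) * (if {i ∈ I | k i = j} = T then 1 else 0) := by
        simp only [hpartition, mul_sum]
        exact Summable.tsum_finsetSum fun _ _ ↦ ENNReal.summable
    _ = ∑ T ∈ I.powersetCard r, q ^ r * (1 - q) ^ (#I - r) := by
        refine sum_congr rfl fun T hT ↦ ?_
        obtain ⟨hTI, rfl⟩ := mem_powersetCard.1 hT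
        exact tsum_prod_mul_ite_filter_eq hf hTI hq
    _ = binomialMass #I r q := by
        rw [sum_const, card_powersetCard, nsmul_eq_mul, binomialMass, mul_assoc]

/-- The number of earlier indices at which a finite path takes its final value: `L_n` for the path
`X_1, …, X_{n+1}` and `𝓛_n` for the path `Z_1, …, Z_{n+1}`. -/
def occupancy {S : Type*} [DecidableEq S] {n : ℕ} (z : Fin (n + 1) → S) : ℕ :=
  #{i : Fin n | z i.castSucc = z (Fin.last n)}

lemma tsum_prod_mul_ite_occupancy_eq {A : Type*} [DecidableEq A] {S : Type*} [DecidableEq S]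
    {p : A → S → ℝ≥0∞} (hp : ∀ a, ∑' s, p a s = 1) {n : ℕ} (x : Fin (n + 1) → A) (r : ℕ) :
    ∑' k : Fin (n + 1) → S,
        (∏ i, p (x i) (k i)) * (if occupancy (fun i ↦ (x i, k i)) = r then 1 else 0) =
      ∑' j, p (x (Fin.last n)) j * binomialMass (occupancy x) r (p (x (Fin.last n)) j) := by
  rw [tsum_fin_succ_eq_tsum_snoc]
  refine tsum_congr fun j ↦ ?_
  have hcount := tsum_prod_mul_ite_card_filter_eq (f := fun i : Fin n ↦ p (x i.castSucc))
    (I := {i : Fin n | x i.castSucc = x (Fin.last n)}) (j := j) (q := p (x (Fin.last n)) j)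
    (fun _ ↦ hp _) (by grind) r
  rw [occupancy, ← hcount, ← ENNReal.tsum_mul_left]
  refine tsum_congr fun k ↦ ?_
  simp only [occupancy, Prod.mk.injEq, Fin.prod_univ_castSucc, Fin.snoc_castSucc, Fin.snoc_last,
    filter_filter]
  ring

lemma nullMeasurableSet_of_measure_add_measure_compl_le {Ω : Type*} [MeasurableSpace Ω]
    {P : Measure Ω} [IsFiniteMeasure P] {s : Set Ω} (h : P s + P sᶜ ≤ P Set.univ) :
    NullMeasurableSet s P := by
  set core := (toMeasurable P sᶜ)ᶜ
  have hcore : MeasurableSet core := (measurableSet_toMeasurable P sᶜ).compl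
  have hcore_sub : core ⊆ s := Set.compl_subset_comm.1 (subset_toMeasurable P sᶜ)
  have hmeasure : P s ≤ P core := by
    rw [measure_compl (measurableSet_toMeasurable P sᶜ) (measure_ne_top _ _), measure_toMeasurable]
    exact ENNReal.le_sub_of_add_le_right (measure_ne_top _ _) h
  have hae : core =ᵐ[P] s :=
    ae_eq_of_subset_of_measure_ge hcore_sub hmeasure hcore.nullMeasurableSet (measure_ne_top _ _)
  exact hcore.nullMeasurableSet.congr hae

section CountablyValued

variable {Ω S T : Type*} [MeasurableSpace Ω] [MeasurableSpace S] [MeasurableSpace T] {P : Measure Ω}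
  [Countable S] [MeasurableSingletonClass S] [Countable T] [MeasurableSingletonClass T]

lemma aemeasurable_of_le_tsum_measure_fiber [IsFiniteMeasure P] {Y : Ω → S}
    (hY : ∑' s, P (Y ⁻¹' {s}) ≤ P Set.univ) : AEMeasurable Y P := by
  have hle (B : Set S) : P (Y ⁻¹' B) ≤ ∑' s : B, P (Y ⁻¹' {↑s}) := by
    rw [← Set.biUnion_preimage_singleton]
    exact measure_biUnion_le P B.to_countable _
  refine NullMeasurable.aemeasurable fun B _ ↦ nullMeasurableSet_of_measure_add_measure_compl_le ?_
  calc P (Y ⁻¹' B) + P (Y ⁻¹' Bᶜ)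
      ≤ ∑' s : B, P (Y ⁻¹' {↑s}) + ∑' s : ↑Bᶜ, P (Y ⁻¹' {↑s}) := add_le_add (hle B) (hle Bᶜ)
    _ = ∑' s, P (Y ⁻¹' {s}) :=
      ENNReal.summable.tsum_add_tsum_compl (f := fun s ↦ P (Y ⁻¹' {s})) ENNReal.summable
    _ ≤ P Set.univ := hY

lemma lintegral_comp_eq_tsum_measure_fiber {Y : Ω → S} (hY : AEMeasurable Y P) (F : S → ℝ≥0∞) :
    ∫⁻ ω, F (Y ω) ∂P = ∑' s, P (Y ⁻¹' {s}) * F s := by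
  rw [← lintegral_map' (Measurable.of_discrete (f := F)).aemeasurable hY, lintegral_countable']
  simp only [Measure.map_apply_of_aemeasurable hY (measurableSet_singleton _), mul_comm]

lemma lintegral_ite_comp_eq_measure {Y : Ω → S} (hY : AEMeasurable Y P) (q : S → Prop)
    [DecidablePred q] : ∫⁻ ω, (if q (Y ω) then 1 else 0) ∂P = P {ω | q (Y ω)} := by
  have hset : NullMeasurableSet {ω | q (Y ω)} P :=
    hY.nullMeasurable (MeasurableSet.of_discrete (s := {s | q s}))
  rw [← lintegral_indicator_one₀ hset]
  simp [Set.indicator_apply]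

lemma lintegral_lintegral_comp_swap [SFinite P] {X : Ω → S} (hX : AEMeasurable X P) {α : Type*}
    [MeasurableSpace α] {ν : Measure α} [SFinite ν] {G : α → S → ℝ≥0∞}
    (hG : ∀ s, Measurable fun u ↦ G u s) :
    ∫⁻ u, ∫⁻ ω, G u (X ω) ∂P ∂ν = ∫⁻ ω, ∫⁻ u, G u (X ω) ∂ν ∂P :=
  lintegral_lintegral_swap <|
    (measurable_from_prod_countable_left (f := Function.uncurry G) hG).comp_aemeasurable
      (measurable_fst.aemeasurable.prodMk hX.comp_snd)

variable [IsProbabilityMeasure P] {X : Ω → S} {K : Ω → T} {w : S → ℝ≥0∞} {q : S → T → ℝ≥0∞}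

lemma aemeasurable_prodMk_of_measure_eq_mul
    (hlaw : ∀ x k, P {ω | X ω = x ∧ K ω = k} = w x * q x k)
    (hw : ∑' x, w x = 1) (hq : ∀ x, ∑' k, q x k = 1) : AEMeasurable (fun ω ↦ (X ω, K ω)) P := by
  refine aemeasurable_of_le_tsum_measure_fiber (le_of_eq ?_)
  simp only [ENNReal.tsum_prod', Set.preimage, Set.mem_singleton_iff, Prod.mk.injEq, hlaw,
    ENNReal.tsum_mul_left, hq, mul_one, hw, measure_univ]

lemma lintegral_eq_lintegral_tsum_of_measure_eq_mul
    (hlaw : ∀ x k, P {ω | X ω = x ∧ K ω = k} = w x * q x k)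
    (hw : ∑' x, w x = 1) (hq : ∀ x, ∑' k, q x k = 1) (F : S → T → ℝ≥0∞) :
    ∫⁻ ω, F (X ω) (K ω) ∂P = ∫⁻ ω, ∑' k, q (X ω) k * F (X ω) k ∂P := by
  have hXK : AEMeasurable (fun ω ↦ (X ω, K ω)) P := aemeasurable_prodMk_of_measure_eq_mul hlaw hw hq
  have hsum (G : S → T → ℝ≥0∞) :
      ∫⁻ ω, G (X ω) (K ω) ∂P = ∑' x, w x * ∑' k, q x k * G x k := by
    rw [lintegral_comp_eq_tsum_measure_fiber hXK fun z ↦ G z.1 z.2]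
    simp only [ENNReal.tsum_prod', Set.preimage, Set.mem_singleton_iff, Prod.mk.injEq, hlaw,
      mul_assoc, ENNReal.tsum_mul_left]
  rw [hsum F, hsum fun x _ ↦ ∑' k, q x k * F x k]
  simp only [ENNReal.tsum_mul_right, hq, one_mul]

end CountablyValued

lemma lintegral_tsum_mul_binomialMass_le {A Ω : Type*} [Countable A] [MeasurableSpace A]
    [MeasurableSingletonClass A] [MeasurableSpace Ω] {P : Measure Ω} [SFinite P] {M : Ω → ℕ}
    {Y : Ω → A} (hM : AEMeasurable M P) (hY : AEMeasurable Y P) {p : A → ℕ → ℝ≥0∞}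
    (hp : ∀ a, ∑' k, p a k = 1) (r : ℕ) (ε : ℝ) :
    ∫⁻ ω, ∑' j, p (Y ω) j * binomialMass (M ω) r (p (Y ω) j) ∂P ≤
      P {ω | M ω = r} * (⨆ a, ∑' k, p a k ^ (r + 1)) +
        (cDGP r * ∫⁻ ω, countingTerm p r (M ω) (Y ω) ε ∂P +
          2 ^ (r + 1) * ∫⁻ u in Set.Ioc 0 ε, ENNReal.ofReal u ^ r *
            ∫⁻ ω, tailTerm p r (M ω) (Y ω) u ∂P) := by
  have hMY : AEMeasurable (fun ω ↦ (M ω, Y ω)) P := hM.prodMk hY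
  have hmeas (F : ℕ × A → ℝ≥0∞) : AEMeasurable (fun ω ↦ F (M ω, Y ω)) P :=
    Measurable.of_discrete.comp_aemeasurable hMY
  have htail : ∫⁻ u in Set.Ioc 0 ε, ENNReal.ofReal u ^ r * ∫⁻ ω, tailTerm p r (M ω) (Y ω) u ∂P =
      ∫⁻ ω, (∫⁻ u in Set.Ioc 0 ε, ENNReal.ofReal u ^ r * tailTerm p r (M ω) (Y ω) u) ∂P := by
    simp only [← lintegral_const_mul' _ _ (pow_ne_top (ofReal_ne_top (r := _)))]
    exact lintegral_lintegral_comp_swap hMY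
      (G := fun u s ↦ ENNReal.ofReal u ^ r * tailTerm p r s.1 s.2 u)
      fun s ↦ .mul (by fun_prop) (measurable_tailTerm p r s.1 s.2)
  calc ∫⁻ ω, ∑' j, p (Y ω) j * binomialMass (M ω) r (p (Y ω) j) ∂P
      ≤ ∫⁻ ω, ((if M ω = r then 1 else 0) * (⨆ a, ∑' k, p a k ^ (r + 1)) +
          (cDGP r * countingTerm p r (M ω) (Y ω) ε + 2 ^ (r + 1) *
            ∫⁻ u in Set.Ioc 0 ε, ENNReal.ofReal u ^ r * tailTerm p r (M ω) (Y ω) u)) ∂P := by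
        refine lintegral_mono fun ω ↦ (tsum_mul_binomialMass_le (hp _) r _ ε).trans_eq ?_
        rw [ite_mul, one_mul, zero_mul]
    _ = _ := by
        rw [lintegral_add_left' (hmeas fun s ↦ (if s.1 = r then 1 else 0) * _),
          lintegral_add_left' (hmeas fun s ↦ cDGP r * countingTerm p r s.1 s.2 ε),
          lintegral_mul_const'' _ (hmeas fun s ↦ if s.1 = r then 1 else 0),
          lintegral_const_mul'' _ (hmeas fun s ↦ countingTerm p r s.1 s.2 ε),
          lintegral_const_mul' _ _ (pow_ne_top ofNat_ne_top), htail,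
          lintegral_ite_comp_eq_measure hM fun m ↦ m = r]

section OccupancyLaw

variable {A Ω S : Type*} [Countable A] [DecidableEq A] [Countable S] [DecidableEq S]
  [MeasurableSpace Ω] {P : Measure Ω} [IsProbabilityMeasure P] {n : ℕ} {X : Ω → Fin (n + 1) → A}
  {w : (Fin (n + 1) → A) → ℝ≥0∞}

lemma measure_occupancy_eq_eq_lintegral {K : Ω → Fin (n + 1) → S} {p : A → S → ℝ≥0∞}
    (hlaw : ∀ x k, P {ω | X ω = x ∧ K ω = k} = w x * ∏ i, p (x i) (k i))
    (hw : ∑' x, w x = 1) (hp : ∀ a, ∑' k, p a k = 1) (r : ℕ) :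
    P {ω | occupancy (fun i ↦ (X ω i, K ω i)) = r} =
      ∫⁻ ω, ∑' j, p (X ω (Fin.last n)) j *
        binomialMass (occupancy (X ω)) r (p (X ω (Fin.last n)) j) ∂P := by
  let _ : MeasurableSpace A := ⊤
  let _ : MeasurableSpace S := ⊤
  have hq := tsum_prod_apply_eq_one (n := n + 1) hp
  have hXK : AEMeasurable (fun ω ↦ (X ω, K ω)) P := aemeasurable_prodMk_of_measure_eq_mul hlaw hw hq
  calc P {ω | occupancy (fun i ↦ (X ω i, K ω i)) = r}
      = ∫⁻ ω, (if occupancy (fun i ↦ (X ω i, K ω i)) = r then 1 else 0) ∂P :=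
        (lintegral_ite_comp_eq_measure hXK fun z ↦ occupancy (fun i ↦ (z.1 i, z.2 i)) = r).symm
    _ = ∫⁻ ω, ∑' k : Fin (n + 1) → S, (∏ i, p (X ω i) (k i)) *
          (if occupancy (fun i ↦ (X ω i, k i)) = r then 1 else 0) ∂P :=
        lintegral_eq_lintegral_tsum_of_measure_eq_mul hlaw hw hq
          fun x k ↦ if occupancy (fun i ↦ (x i, k i)) = r then 1 else 0
    _ = ∫⁻ ω, ∑' j, p (X ω (Fin.last n)) j *
          binomialMass (occupancy (X ω)) r (p (X ω (Fin.last n)) j) ∂P := by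
        simp only [tsum_prod_mul_ite_occupancy_eq hp]

lemma measure_occupancy_eq_le {K : Ω → Fin (n + 1) → ℕ} {p : A → ℕ → ℝ≥0∞}
    (hlaw : ∀ x k, P {ω | X ω = x ∧ K ω = k} = w x * ∏ i, p (x i) (k i))
    (hw : ∑' x, w x = 1) (hp : ∀ a, ∑' k, p a k = 1) (r : ℕ) (ε : ℝ) :
    P {ω | occupancy (fun i ↦ (X ω i, K ω i)) = r} ≤
      P {ω | occupancy (X ω) = r} * (⨆ a, ∑' k, p a k ^ (r + 1)) +
        (cDGP r * ∫⁻ ω, countingTerm p r (occupancy (X ω)) (X ω (Fin.last n)) ε ∂P +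
          2 ^ (r + 1) * ∫⁻ u in Set.Ioc 0 ε, ENNReal.ofReal u ^ r *
            ∫⁻ ω, tailTerm p r (occupancy (X ω)) (X ω (Fin.last n)) u ∂P) := by
  let _ : MeasurableSpace A := ⊤
  have hX : AEMeasurable X P :=
    (aemeasurable_prodMk_of_measure_eq_mul hlaw hw (tsum_prod_apply_eq_one hp)).fst
  have hlast : AEMeasurable (fun ω ↦ X ω (Fin.last n)) P := aemeasurable_pi_iff.1 hX _
  have hocc : AEMeasurable (fun ω ↦ occupancy (X ω)) P :=
    (Measurable.of_discrete (f := occupancy)).comp_aemeasurable hX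
  rw [measure_occupancy_eq_eq_lintegral hlaw hw hp]
  exact lintegral_tsum_mul_binomialMass_le hocc hlast hp r ε

end OccupancyLaw

lemma measure_path_eq_prod_mul_prod {A Ω : Type*} [MeasurableSpace Ω] {P : Measure Ω}
    {Z : ℕ → Ω → A × ℕ} {p : A → ℕ → ℝ≥0∞} {R : ℕ → (ℕ → A) → A → ℝ≥0∞} {n : ℕ}
    (hZ : ∀ (a : ℕ → A) (k : ℕ → ℕ), P (⋂ i ∈ range n, {ω | Z i ω = (a i, k i)}) =
      (∏ i ∈ range n, R i a (a i)) * ∏ i ∈ range n, p (a i) (k i))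
    (c : ℕ → A) (x : Fin n → A) (k : Fin n → ℕ) :
    P {ω | (fun i : Fin n ↦ (Z i ω).1) = x ∧ (fun i : Fin n ↦ (Z i ω).2) = k} =
      (∏ i : Fin n, R i (Function.extend Fin.val x c) (x i)) * ∏ i, p (x i) (k i) := by
  have h := hZ (Function.extend Fin.val x c) (Function.extend Fin.val k 0)
  simp only [prod_range, Fin.val_injective.extend_apply] at h
  rw [← h]
  congr 1
  ext ω
  simp only [Set.mem_ofPred_eq, Set.mem_iInter, mem_range, funext_iff, Prod.ext_iff,
    ← forall_and, Fin.forall_iff]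
  refine forall₂_congr fun i hi ↦ ?_
  lift i to Fin n using hi
  simp only [Fin.val_injective.extend_apply]

lemma sum_ite_eq_eq_occupancy {S : Type*} [DecidableEq S] (z : ℕ → S) (n : ℕ) :
    (∑ i ∈ range n, if z i = z n then 1 else 0) = occupancy fun i : Fin (n + 1) ↦ z i := by
  rw [occupancy, card_filter, sum_range]
  rfl

/-- Theorem 4.1: for the regime switching model, for `n ≥ 1`, `0 ≤ r ≤ n−1`,
`P{𝓛_n = r} ≤ P{L_n = r}·sup_a Σ_k p_{a,k}^{1+r} + inf_{0≤ε≤1}(a^{n,r}(ε) + b^{n,r}(ε))`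
with `a^{n,r}(ε) = c(r)E[1{L_n > r} ν(X_{n+1},ε)/L_n]` and
`b^{n,r}(ε) = 2^{1+r}∫_0^ε u^r E[1{L_n > r} ν(X_{n+1},u/2)·binom(L_n,r)(1−u/2)^{L_n−r}]du`.
(Indexed from 0: `𝓛_n = Σ_{i<n} 1{Z_i = Z_n}`, `L_n = Σ_{i<n} 1{X_i = X_n}`.) -/
theorem regime_switching_occupancy_bound {A : Type*} [Countable A] [DecidableEq A]
    {Ω : Type*} [MeasurableSpace Ω] (P : Measure Ω) [IsProbabilityMeasure P]
    (Z : ℕ → Ω → A × ℕ)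
    (p : A → ℕ → ℝ≥0∞) (hp : ∀ a, ∑' k, p a k = 1)
    (R : ℕ → (ℕ → A) → A → ℝ≥0∞)
    (hRdep : ∀ (n : ℕ) (a a' : ℕ → A), (∀ i < n, a i = a' i) → R n a = R n a')
    (hRsum : ∀ (n : ℕ) (a : ℕ → A), ∑' b, R n a b = 1)
    (hZ : ∀ (n : ℕ) (a : ℕ → A) (k : ℕ → ℕ),
      P (⋂ i ∈ Finset.range (n + 1), {ω | Z i ω = (a i, k i)}) =
        (∏ i ∈ Finset.range (n + 1), R i a (a i)) *
          ∏ i ∈ Finset.range (n + 1), p (a i) (k i))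
    (n r : ℕ) (hn : 1 ≤ n) (hr : r ≤ n - 1) :
    P {ω | (∑ i ∈ Finset.range n, if Z i ω = Z n ω then 1 else 0 : ℕ) = r} ≤
      P {ω | (∑ i ∈ Finset.range n, if (Z i ω).1 = (Z n ω).1 then 1 else 0 : ℕ) = r} *
          (⨆ a : A, ∑' k, p a k ^ (r + 1)) +
        ⨅ ε ∈ Set.Icc (0 : ℝ) 1,
          (cDGP r * ∫⁻ ω,
              (if r < (∑ i ∈ Finset.range n, if (Z i ω).1 = (Z n ω).1 then 1 else 0 : ℕ) then
                nuCount p (Z n ω).1 ε /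
                  ((∑ i ∈ Finset.range n, if (Z i ω).1 = (Z n ω).1 then 1 else 0 : ℕ) : ℝ≥0∞)
              else 0) ∂P) +
          2 ^ (r + 1) * ∫⁻ u in Set.Ioc (0 : ℝ) ε,
            ENNReal.ofReal u ^ r * ∫⁻ ω,
              (if r < (∑ i ∈ Finset.range n, if (Z i ω).1 = (Z n ω).1 then 1 else 0 : ℕ) then
                nuCount p (Z n ω).1 (u / 2) *
                  (((∑ i ∈ Finset.range n,
                      if (Z i ω).1 = (Z n ω).1 then 1 else 0 : ℕ).choose r : ℝ≥0∞)) *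
                  ENNReal.ofReal (1 - u / 2) ^
                    ((∑ i ∈ Finset.range n, if (Z i ω).1 = (Z n ω).1 then 1 else 0 : ℕ) - r)
              else 0) ∂P := by
  obtain ⟨ω₀⟩ : Nonempty Ω := P.nonempty_of_neZero
  have hlaw := measure_path_eq_prod_mul_prod (hZ n) fun i ↦ (Z i ω₀).1
  have hw := tsum_prod_extend_eq_one hRdep hRsum (fun i ↦ (Z i ω₀).1) (n + 1)
  have hL (ω : Ω) := sum_ite_eq_eq_occupancy (fun i ↦ Z i ω) n
  have hLX (ω : Ω) := sum_ite_eq_eq_occupancy (fun i ↦ (Z i ω).1) n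
  simp only [hL, hLX, add_iInf₂]
  exact le_iInf₂ fun ε _ ↦ measure_occupancy_eq_le hlaw hw hp r ε
end

section
/- Assume the regime switching model with |A| < ∞, the underlying process an aperiodic irreducible Markov chain on A with stationary distribution π and initial distribution η, and P ∈ RV_α(C, ℓ) with α ∈ (0,1), where ℓ is locally bounded away from 0 and ∞ on [1,∞). Then for all r ≥ 0: lim_{n→∞} P_η{𝓛_n = r} / ( n^{−(1−α)} ℓ(n) ) = Σ_{a∈A} π_a^α C(a) · αΓ(r+1−α)/r!. -/
open MeasureTheory ENNReal Finset Filter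

/-- `t`-step transition matrix of a kernel `Q` on a finite set. -/
noncomputable def mpow {A : Type*} [Fintype A] [DecidableEq A] (Q : A → A → ℝ) :
    ℕ → A → A → ℝ
  | 0 => fun x y => if x = y then 1 else 0
  | (t + 1) => fun x y => ∑ z, Q x z * mpow Q t z y

/-- `ℓ` is slowly varying at `+∞`: `ℓ(cx)/ℓ(x) → 1` for every `c > 0`. -/
def SlowlyVarying (ℓ : ℝ → ℝ) : Prop :=
  ∀ c : ℝ, 0 < c → Tendsto (fun x => ℓ (c * x) / ℓ x) atTop (nhds 1)

open scoped Classical in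
/-- The (real-valued) counting function `ν(a,ε) = Σ_k 1{p_{a,k} ≥ ε}`. -/
noncomputable def nuR {A : Type*} (p : A → ℕ → ℝ) (a : A) (ε : ℝ) : ℝ :=
  ∑' k, if ε ≤ p a k then (1 : ℝ) else 0

open scoped Topology Matrix

/-!
Given the regimes `X_0, …, X_n`, only the earlier visits to `X_n` can produce matches, so
`𝓛_n = r` has conditional probability `matchProb (p X_n) r m`, where `m` is the number of those
visits. By the layer-cake formula, `m * matchProb q r m` is an integral of the counting function
`ν(u / m)` against a kernel converging to `((r + 1) u ^ r - u ^ (r + 1)) e ^ (-u) / r!`; since `ν`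
is regularly varying, domination by `u ^ (-β) + 1` with `α < β < 1` yields the Gamma function.

Doeblin's contraction makes the correlations of the chain summable, so the number of visits to `a`
has mean-square deviation `O(n)` from `n * π a`. This beats the `o(n)` bound on the normalized match
probability on the exceptional event of Chebyshev's inequality, and elsewhere `m / n → π a`.
Monotonicity of `ν` makes regular variation locally uniform, so the passage from `m` to `n` costs
a factor `π a ^ (α - 1)`. The weight `π a` of the event `X_n = a` completes it to `π a ^ α`.
-/

section RegularVariation

/-- `W` is regularly varying at `+∞` with index `α`: `W (c x) / W x → c ^ α` for every `c > 0`.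
Measurability is not part of the definition. -/
def RegularlyVarying (α : ℝ) (W : ℝ → ℝ) : Prop :=
  ∀ c : ℝ, 0 < c → Tendsto (fun x => W (c * x) / W x) atTop (𝓝 (c ^ α))

theorem SlowlyVarying.regularlyVarying_rpow_mul {ℓ : ℝ → ℝ} (hℓ : SlowlyVarying ℓ) (α : ℝ) :
    RegularlyVarying α fun x => x ^ α * ℓ x := by
  intro c hc
  have h := (hℓ c hc).const_mul (c ^ α)
  rw [mul_one] at h
  refine h.congr' ?_
  filter_upwards [eventually_gt_atTop 0] with x hx
  have hxα : x ^ α ≠ 0 := (Real.rpow_pos_of_pos hx α).ne'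
  rw [Real.mul_rpow hc.le hx.le, mul_assoc, mul_div_assoc, mul_div_mul_left _ _ hxα]

namespace RegularlyVarying

variable {α β D c : ℝ} {V W : ℝ → ℝ}

theorem eventually_ne_zero (hW : RegularlyVarying α W) : ∀ᶠ x in atTop, W x ≠ 0 := by
  have h := hW 1 one_pos
  simp only [one_mul, Real.one_rpow] at h
  filter_upwards [h.eventually_ne one_ne_zero] with x hx
  exact (div_ne_zero_iff.1 hx).1

theorem tendsto_comp_mul_div (hW : RegularlyVarying α W)
    (hVW : Tendsto (fun x => V x / W x) atTop (𝓝 D)) (hc : 0 < c) :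
    Tendsto (fun x => V (c * x) / W x) atTop (𝓝 (D * c ^ α)) := by
  have hcx : Tendsto (fun x => c * x) atTop atTop := tendsto_id.const_mul_atTop hc
  refine ((hVW.comp hcx).mul (hW c hc)).congr' ?_
  filter_upwards [hcx.eventually hW.eventually_ne_zero] with x hx
  exact div_mul_div_cancel₀ hx

theorem of_tendsto_div (hW : RegularlyVarying α W)
    (hVW : Tendsto (fun x => V x / W x) atTop (𝓝 D)) (hD : D ≠ 0) : RegularlyVarying α V := by
  intro c hc
  have h := (hW.tendsto_comp_mul_div hVW hc).div hVW hD
  rw [mul_div_cancel_left₀ _ hD] at h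
  refine h.congr' ?_
  filter_upwards [hW.eventually_ne_zero] with x hx
  exact div_div_div_cancel_right₀ hx _ _

theorem eventually_comp_two_pow_mul_le (hW : RegularlyVarying α W)
    (hpos : ∀ᶠ x in atTop, 0 < W x) (hαβ : α < β) :
    ∀ᶠ x in atTop, ∀ j : ℕ, W (2 ^ j * x) ≤ ((2 : ℝ) ^ j) ^ β * W x := by
  have h2 : ∀ᶠ x in atTop, W (2 * x) / W x < 2 ^ β :=
    (hW 2 two_pos).eventually_lt_const (Real.rpow_lt_rpow_of_exponent_lt one_lt_two hαβ)
  obtain ⟨X, hX⟩ := eventually_atTop.1 (h2.and hpos)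
  filter_upwards [eventually_ge_atTop (max X 0)] with x hx j
  have hgeom := le_geom (u := fun j : ℕ => W (2 ^ j * x)) (c := 2 ^ β) (by positivity) j
    fun i _ => by
      have hi : X ≤ 2 ^ i * x := (le_max_left X 0).trans <| hx.trans <|
        le_mul_of_one_le_left ((le_max_right X 0).trans hx) (one_le_pow₀ one_le_two)
      have hstep := ((div_lt_iff₀ (hX _ hi).2).1 (hX _ hi).1).le
      rwa [← mul_assoc, ← pow_succ'] at hstep
  rwa [pow_zero, one_mul, Real.rpow_pow_comm two_pos.le] at hgeom

theorem tendsto_atTop_of_monotoneOn (hV : RegularlyVarying α V) (hα : 0 < α)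
    (hmono : MonotoneOn V (Set.Ioi 0)) (hpos : ∀ᶠ x in atTop, 0 < V x) :
    Tendsto V atTop atTop := by
  obtain ⟨ρ, hρ1, hρ⟩ := exists_between (Real.one_lt_rpow one_lt_two hα)
  obtain ⟨X, hX⟩ := eventually_atTop.1 (((hV 2 two_pos).eventually_const_lt hρ).and hpos)
  set Y := max X 1
  have hY : 0 < Y := one_pos.trans_le (le_max_right X 1)
  have hXY : ∀ j : ℕ, X ≤ 2 ^ j * Y := fun j =>
    (le_max_left X 1).trans (le_mul_of_one_le_left hY.le (one_le_pow₀ one_le_two))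
  have hgeom : Tendsto (fun j : ℕ => V (2 ^ j * Y)) atTop atTop :=
    tendsto_atTop_of_geom_le (hX _ (hXY 0)).2 hρ1 fun j => by
      have hstep := ((lt_div_iff₀ (hX _ (hXY j)).2).1 (hX _ (hXY j)).1).le
      rwa [← mul_assoc, ← pow_succ'] at hstep
  refine tendsto_atTop.2 fun b => ?_
  obtain ⟨j, hj⟩ := (hgeom.eventually_ge_atTop b).exists
  filter_upwards [eventually_ge_atTop (2 ^ j * Y)] with x hx
  have hjY : 0 < 2 ^ j * Y := by positivity
  exact hj.trans (hmono hjY (hjY.trans_le hx) hx)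

variable {ι : Type*} {l : Filter ι} {x y : ι → ℝ}

/- For a monotone function the convergence `V (c x) / V x → c ^ α` is locally uniform in `c`,
because `V y` is squeezed between `V (c' x)` and `V (c'' x)` for fixed `c' < c < c''`. -/
theorem tendsto_div_of_monotoneOn (hV : RegularlyVarying α V)
    (hmono : MonotoneOn V (Set.Ioi 0)) (hpos : ∀ᶠ x in atTop, 0 < V x)
    (hx : Tendsto x l atTop) (hc : 0 < c) (hyx : Tendsto (fun i => y i / x i) l (𝓝 c)) :
    Tendsto (fun i => V (y i) / V (x i)) l (𝓝 (c ^ α)) := by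
  have hcont : Tendsto (fun t : ℝ => t ^ α) (𝓝 c) (𝓝 (c ^ α)) :=
    (Real.continuousAt_rpow_const c α (Or.inl hc.ne')).tendsto
  refine tendsto_order.2 ⟨fun b hb => ?_, fun b hb => ?_⟩
  · obtain ⟨t, ⟨hbt, ht⟩, htc⟩ := ((((hcont.eventually_const_lt hb).and
      (lt_mem_nhds hc)).filter_mono nhdsWithin_le_nhds).and
      (self_mem_nhdsWithin (s := Set.Iio c))).exists
    filter_upwards [hx.eventually ((hV t ht).eventually_const_lt hbt), hx.eventually hpos,
      hx.eventually_gt_atTop 0, hyx.eventually_const_lt htc] with i hi hVx hx0 hti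
    have hle : t * x i ≤ y i := ((lt_div_iff₀ hx0).1 hti).le
    exact hi.trans_le (div_le_div_of_nonneg_right
      (hmono (mul_pos ht hx0) ((mul_pos ht hx0).trans_le hle) hle) hVx.le)
  · obtain ⟨t, hbt, htc⟩ := (((hcont.eventually_lt_const hb).filter_mono
      nhdsWithin_le_nhds).and (self_mem_nhdsWithin (s := Set.Ioi c))).exists
    have ht : 0 < t := hc.trans htc
    filter_upwards [hx.eventually ((hV t ht).eventually_lt_const hbt), hx.eventually hpos,
      hx.eventually_gt_atTop 0, hyx.eventually_lt_const htc, hyx.eventually_const_lt hc]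
      with i hi hVx hx0 hti hy0
    have hle : y i ≤ t * x i := ((div_lt_iff₀ hx0).1 hti).le
    exact (div_le_div_of_nonneg_right (hmono ((div_pos_iff_of_pos_right hx0).1 hy0)
      (mul_pos ht hx0) hle) hVx.le).trans_lt hi

theorem tendsto_div_of_tendsto_monotoneOn_div (hW : RegularlyVarying α W)
    (hmono : MonotoneOn V (Set.Ioi 0)) (hpos : ∀ᶠ x in atTop, 0 < V x)
    (hVW : Tendsto (fun x => V x / W x) atTop (𝓝 D)) (hD : D ≠ 0)
    (hx : Tendsto x l atTop) (hc : 0 < c) (hyx : Tendsto (fun i => y i / x i) l (𝓝 c)) :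
    Tendsto (fun i => W (y i) / W (x i)) l (𝓝 (c ^ α)) := by
  have hy : Tendsto y l atTop := by
    refine (hyx.pos_mul_atTop hc hx).congr' ?_
    filter_upwards [hx.eventually_ne_atTop 0] with i hi
    exact div_mul_cancel₀ _ hi
  have hV := (hW.of_tendsto_div hVW hD).tendsto_div_of_monotoneOn hmono hpos hx hc hyx
  have h := (hV.div (hVW.comp hy) hD).mul (hVW.comp hx)
  rw [div_mul_cancel₀ _ hD] at h
  refine h.congr' ?_
  filter_upwards [hx.eventually hpos, hy.eventually hpos, hx.eventually hW.eventually_ne_zero,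
    hy.eventually hW.eventually_ne_zero] with i hVx hVy hWx hWy
  simp only [Pi.div_apply, Function.comp_apply]
  field_simp

end RegularlyVarying

end RegularVariation

section AbelianTheorem

variable {α β D : ℝ} {W N : ℝ → ℝ}

theorem tendsto_comp_one_div_div_rpow_mul {ℓ : ℝ → ℝ}
    (h : Tendsto (fun ε => N ε / (ε ^ (-α) * ℓ (1 / ε))) (𝓝[>] 0) (𝓝 D)) :
    Tendsto (fun x => N (1 / x) / (x ^ α * ℓ x)) atTop (𝓝 D) := by
  refine (h.comp tendsto_inv_atTop_nhdsGT_zero).congr' ?_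
  filter_upwards [eventually_gt_atTop 0] with x hx
  simp only [Function.comp_apply, one_div, inv_inv]
  rw [Real.inv_rpow hx.le, Real.rpow_neg hx.le, inv_inv]

theorem RegularlyVarying.tendsto_comp_div_div (hW : RegularlyVarying α W)
    (hNW : Tendsto (fun x => N (1 / x) / W x) atTop (𝓝 D)) {u : ℝ} (hu : 0 < u) :
    Tendsto (fun x => N (u / x) / W x) atTop (𝓝 (D * u ^ (-α))) := by
  have h := hW.tendsto_comp_mul_div hNW (inv_pos.2 hu)
  rw [Real.inv_rpow hu.le, ← Real.rpow_neg hu.le] at h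
  refine h.congr fun x => ?_
  rw [one_div, mul_inv, inv_inv, ← div_eq_mul_inv]

theorem RegularlyVarying.exists_forall_comp_div_div_le (hW : RegularlyVarying α W)
    (hpos : ∀ᶠ x in atTop, 0 < W x) (hα : 0 < α) (hαβ : α < β)
    (hN : AntitoneOn N (Set.Ioi 0)) (hNW : Tendsto (fun x => N (1 / x) / W x) atTop (𝓝 D)) :
    ∃ K, 0 ≤ K ∧ ∀ᶠ x in atTop, ∀ u, 0 < u → N (u / x) / W x ≤ K * (u ^ (-β) + 1) := by
  set B := |D| + 1
  have hB : 0 < B := by positivity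
  have hDB : D < B := (le_abs_self D).trans_lt (lt_add_one _)
  obtain ⟨X, hX⟩ := eventually_atTop.1 ((hNW.eventually_lt_const hDB).and hpos)
  have hNB : ∀ x, X ≤ x → N (1 / x) ≤ B * W x := fun x hx =>
    ((div_lt_iff₀ (hX x hx).2).1 (hX x hx).1).le
  refine ⟨B * 2 ^ β, by positivity, ?_⟩
  filter_upwards [eventually_ge_atTop X, eventually_gt_atTop 0,
    hW.eventually_comp_two_pow_mul_le hpos hαβ] with x hxX hx hpow u hu
  have hWx := (hX x hxX).2
  rw [div_le_iff₀ hWx]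
  rcases le_total 1 u with hu1 | hu1
  · calc N (u / x) ≤ N (1 / x) := hN (div_pos one_pos hx) (div_pos hu hx) (by gcongr)
      _ ≤ B * W x := hNB x hxX
      _ ≤ B * 2 ^ β * (u ^ (-β) + 1) * W x := by
        gcongr
        rw [mul_assoc]
        refine le_mul_of_one_le_right hB.le (one_le_mul_of_one_le_of_one_le ?_ ?_)
        · exact Real.one_le_rpow one_le_two (hα.trans hαβ).le
        · exact le_add_of_nonneg_left (by positivity)
  · obtain ⟨j, hju, huj⟩ := exists_nat_pow_near ((one_le_inv₀ hu).2 hu1) one_lt_two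
    have hxj : x ≤ 2 ^ (j + 1) * x := le_mul_of_one_le_left hx.le (one_le_pow₀ one_le_two)
    calc N (u / x) ≤ N (1 / (2 ^ (j + 1) * x)) := by
          refine hN (Set.mem_Ioi.2 (by positivity)) (div_pos hu hx) ?_
          rw [← div_div, one_div]
          gcongr
          exact inv_le_of_inv_le₀ hu huj.le
      _ ≤ B * W (2 ^ (j + 1) * x) := hNB _ (hxX.trans hxj)
      _ ≤ B * (((2 : ℝ) ^ (j + 1)) ^ β * W x) := by gcongr; exact hpow (j + 1)
      _ = B * 2 ^ β * ((2 : ℝ) ^ j) ^ β * W x := by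
        rw [pow_succ, Real.mul_rpow (by positivity) two_pos.le]; ring
      _ ≤ B * 2 ^ β * (u ^ (-β) + 1) * W x := by
        rw [Real.rpow_neg hu.le, ← Real.inv_rpow hu.le]
        gcongr
        refine le_add_of_le_of_nonneg ?_ zero_le_one
        gcongr
        exact (hα.trans hαβ).le

theorem RegularlyVarying.tendsto_integral_mul_comp_div_div (hW : RegularlyVarying α W)
    (hpos : ∀ᶠ x in atTop, 0 < W x) (hα : 0 < α) (hαβ : α < β)
    (hN : AntitoneOn N (Set.Ioi 0)) (hN1 : ∀ u, 1 < u → N u = 0)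
    (hNW : Tendsto (fun x => N (1 / x) / W x) atTop (𝓝 D))
    {g : ℕ → ℝ → ℝ} {g' h : ℝ → ℝ} (hg : ∀ n, Continuous (g n))
    (hgh : ∀ᶠ n : ℕ in atTop, ∀ u : ℝ, 0 < u → u ≤ n → |g n u| ≤ h u)
    (hh : IntegrableOn (fun u => h u * (u ^ (-β) + 1)) (Set.Ioi 0))
    (hh0 : ∀ u, 0 < u → 0 ≤ h u)
    (hgg' : ∀ u, 0 < u → Tendsto (fun n => g n u) atTop (𝓝 (g' u))) :
    Tendsto (fun n : ℕ => (∫ u in Set.Ioi 0, g n u * N (u / n)) / W n) atTop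
      (𝓝 (D * ∫ u in Set.Ioi 0, g' u * u ^ (-α))) := by
  obtain ⟨K, hK, hNK⟩ := hW.exists_forall_comp_div_div_le hpos hα hαβ hN hNW
  have hcast := tendsto_natCast_atTop_atTop (R := ℝ)
  simp only [← integral_div, ← integral_const_mul, mul_div_assoc]
  refine tendsto_integral_filter_of_dominated_convergence _ ?_ ?_ (hh.const_mul K) ?_
  · filter_upwards [eventually_gt_atTop 0] with n hn
    have hn' : (0 : ℝ) < n := Nat.cast_pos.2 hn
    have hanti : AntitoneOn (fun u : ℝ => N (u / n)) (Set.Ioi 0) := fun u hu v hv huv =>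
      hN (div_pos hu hn') (div_pos hv hn') (by gcongr)
    exact (hg n).aestronglyMeasurable.mul
      ((aemeasurable_restrict_of_antitoneOn measurableSet_Ioi hanti).div_const
        _).aestronglyMeasurable
  · filter_upwards [eventually_gt_atTop 0, hgh, hcast.eventually hNK, hcast.eventually hpos]
      with n hn hghn hNKn hWn
    filter_upwards [ae_restrict_mem measurableSet_Ioi] with u (hu : 0 < u)
    have hn' : (0 : ℝ) < n := Nat.cast_pos.2 hn
    rcases le_or_gt u n with hun | hun
    · have hN0 : 0 ≤ N (u / n) := by
        have hlt : u / n < u / n + 2 := lt_add_of_pos_right _ two_pos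
        have hun' : 0 < u / n := div_pos hu hn'
        rw [← hN1 (u / n + 2) (by linarith)]
        exact hN hun' (hun'.trans hlt) hlt.le
      rw [norm_mul, Real.norm_eq_abs, Real.norm_of_nonneg (div_nonneg hN0 hWn.le), mul_left_comm]
      exact mul_le_mul (hghn u hu hun) (hNKn u hu) (div_nonneg hN0 hWn.le) (hh0 u hu)
    · rw [hN1 _ ((one_lt_div hn').2 hun), zero_div, mul_zero, norm_zero]
      have := hh0 u hu
      positivity
  · filter_upwards [ae_restrict_mem measurableSet_Ioi] with u (hu : 0 < u)
    rw [mul_left_comm]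
    exact (hgg' u hu).mul ((hW.tendsto_comp_div_div hNW hu).comp hcast)

end AbelianTheorem

section CountingFunction

variable {κ : Type*}

open scoped Classical in
/-- The counting function `ν(ε) = #{k | ε ≤ q k}` of a family of weights, with the value `0` when
the set is infinite. -/
noncomputable def countingFn (q : κ → ℝ) (ε : ℝ) : ℝ :=
  ∑' k, if ε ≤ q k then (1 : ℝ) else 0

variable {q : κ → ℝ}

theorem summable_ite_le (hq0 : ∀ k, 0 ≤ q k) (hq : Summable q) {ε : ℝ} (hε : 0 < ε)
    [∀ k, Decidable (ε ≤ q k)] : Summable fun k => if ε ≤ q k then (1 : ℝ) else 0 := by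
  refine .of_nonneg_of_le (fun k => by positivity) (fun k => ?_) (hq.mul_left ε⁻¹)
  split_ifs with h
  · rwa [← div_eq_inv_mul, one_le_div hε]
  · exact mul_nonneg (inv_nonneg.2 hε.le) (hq0 k)

theorem countingFn_nonneg (q : κ → ℝ) (ε : ℝ) : 0 ≤ countingFn q ε :=
  tsum_nonneg fun k => by positivity

theorem antitoneOn_countingFn (hq0 : ∀ k, 0 ≤ q k) (hq : Summable q) :
    AntitoneOn (countingFn q) (Set.Ioi 0) := by
  classical
  intro x hx y hy hxy
  refine (summable_ite_le hq0 hq hy).tsum_le_tsum (fun k => ?_) (summable_ite_le hq0 hq hx)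
  by_cases h : y ≤ q k
  · rw [if_pos h, if_pos (hxy.trans h)]
  · rw [if_neg h]
    positivity

theorem countingFn_eq_zero {ε : ℝ} (h : ∀ k, q k < ε) : countingFn q ε = 0 := by
  simp only [countingFn, (h _).not_ge, if_false, tsum_zero]

theorem countingFn_const_mul (q : κ → ℝ) {c : ℝ} (hc : 0 < c) (ε : ℝ) :
    countingFn (fun k => c * q k) ε = countingFn q (ε / c) := by
  simp only [countingFn, div_le_iff₀' hc]

theorem tsum_comp_eq_integral_mul_countingFn [Countable κ] (hq0 : ∀ k, 0 ≤ q k)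
    (hq : Summable q) {G G' : ℝ → ℝ} (hG : ∀ x, HasDerivAt G (G' x) x) (hG' : Continuous G')
    (hG0 : G 0 = 0) : ∑' k, G (q k) = ∫ u in Set.Ioi 0, G' u * countingFn q u := by
  classical
  set F : κ → ℝ → ℝ := fun k => (Set.Iic (q k)).indicator G'
  have hsetIntegral (k : κ) (f : ℝ → ℝ) :
      ∫ u in Set.Ioi 0, (Set.Iic (q k)).indicator f u = ∫ u in (0)..q k, f u := by
    rw [setIntegral_indicator measurableSet_Iic, Set.Ioi_inter_Iic,
      intervalIntegral.integral_of_le (hq0 k)]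
  have hF (k : κ) : ∫ u in Set.Ioi 0, F k u = G (q k) := by
    rw [hsetIntegral, intervalIntegral.integral_eq_sub_of_hasDerivAt (fun x _ => hG x)
      (hG'.intervalIntegrable _ _), hG0, sub_zero]
  have hFint (k : κ) : IntegrableOn (F k) (Set.Ioi 0) := by
    rw [IntegrableOn, integrable_indicator_iff measurableSet_Iic, IntegrableOn,
      Measure.restrict_restrict measurableSet_Iic, Set.Iic_inter_Ioi]
    exact hG'.integrableOn_Ioc
  obtain ⟨M, hM⟩ := (isCompact_Icc (a := 0) (b := ∑' k, q k)).exists_bound_of_continuousOn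
    hG'.continuousOn
  have hFM (k : κ) : ∫ u in Set.Ioi 0, ‖F k u‖ ≤ M * q k := by
    have hbound := intervalIntegral.norm_integral_le_of_norm_le_const (f := fun u => ‖G' u‖)
      (a := 0) (b := q k) (C := M) fun u hu => by
        rw [Set.uIoc_of_le (hq0 k)] at hu
        rw [norm_norm]
        exact hM u ⟨hu.1.le, hu.2.trans (hq.le_tsum k fun j _ => hq0 j)⟩
    rw [sub_zero, abs_of_nonneg (hq0 k)] at hbound
    simp only [F, norm_indicator_eq_indicator_norm]
    rw [hsetIntegral]
    exact (le_abs_self _).trans hbound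
  calc ∑' k, G (q k) = ∑' k, ∫ u in Set.Ioi 0, F k u := by simp only [hF]
    _ = ∫ u in Set.Ioi 0, ∑' k, F k u := integral_tsum_of_summable_integral_norm hFint <|
      .of_nonneg_of_le (fun k => integral_nonneg fun u => norm_nonneg _) hFM (hq.mul_left M)
    _ = ∫ u in Set.Ioi 0, G' u * countingFn q u := by
      simp only [countingFn, ← tsum_mul_left, F, Set.indicator_apply, Set.mem_Iic, mul_ite,
        mul_one, mul_zero]

end CountingFunction

section MatchProbability

variable {κ : Type*}

/-- The probability that exactly `r` of `m` independent draws from the distribution `q` agree with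
one further independent draw. -/
noncomputable def matchProb (q : κ → ℝ) (r m : ℕ) : ℝ :=
  m.choose r * ∑' k, q k ^ (r + 1) * (1 - q k) ^ (m - r)

theorem choose_mul_pow_mul_one_sub_pow_le_one {x : ℝ} (hx0 : 0 ≤ x) (hx1 : x ≤ 1) (r m : ℕ) :
    m.choose r * (x ^ r * (1 - x) ^ (m - r)) ≤ 1 := by
  have : 0 ≤ 1 - x := sub_nonneg.2 hx1
  rcases lt_or_ge m r with hmr | hmr
  · simp [Nat.choose_eq_zero_of_lt hmr]
  · calc (m.choose r : ℝ) * (x ^ r * (1 - x) ^ (m - r))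
        = x ^ r * (1 - x) ^ (m - r) * m.choose r := mul_comm _ _
      _ ≤ ∑ i ∈ range (m + 1), x ^ i * (1 - x) ^ (m - i) * m.choose i :=
        single_le_sum (f := fun i => x ^ i * (1 - x) ^ (m - i) * (m.choose i : ℝ))
          (fun i _ => by positivity) (mem_range_succ_iff.2 hmr)
      _ = 1 := by rw [← add_pow, add_sub_cancel, one_pow]

variable {q : κ → ℝ}

theorem choose_mul_pow_succ_mul_one_sub_pow_le {x : ℝ} (hx0 : 0 ≤ x) (hx1 : x ≤ 1) (r m : ℕ) :
    m.choose r * (x ^ (r + 1) * (1 - x) ^ (m - r)) ≤ x := by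
  calc (m.choose r : ℝ) * (x ^ (r + 1) * (1 - x) ^ (m - r))
      = x * (m.choose r * (x ^ r * (1 - x) ^ (m - r))) := by ring
    _ ≤ x := mul_le_of_le_one_right hx0 (choose_mul_pow_mul_one_sub_pow_le_one hx0 hx1 r m)

theorem matchProb_nonneg (hq0 : ∀ k, 0 ≤ q k) (hq1 : ∀ k, q k ≤ 1) (r m : ℕ) :
    0 ≤ matchProb q r m :=
  mul_nonneg (Nat.cast_nonneg _) <| tsum_nonneg fun k =>
    mul_nonneg (pow_nonneg (hq0 k) _) (pow_nonneg (sub_nonneg.2 (hq1 k)) _)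

theorem summable_choose_mul_pow_succ_mul_one_sub_pow (hq0 : ∀ k, 0 ≤ q k) (hq1 : ∀ k, q k ≤ 1)
    (hq : Summable q) (r m : ℕ) :
    Summable fun k => m.choose r * (q k ^ (r + 1) * (1 - q k) ^ (m - r)) :=
  .of_nonneg_of_le (fun k => mul_nonneg (Nat.cast_nonneg _) <|
      mul_nonneg (pow_nonneg (hq0 k) _) (pow_nonneg (sub_nonneg.2 (hq1 k)) _))
    (fun k => choose_mul_pow_succ_mul_one_sub_pow_le (hq0 k) (hq1 k) r m) hq

theorem matchProb_le_tsum (hq0 : ∀ k, 0 ≤ q k) (hq1 : ∀ k, q k ≤ 1) (hq : Summable q)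
    (r m : ℕ) : matchProb q r m ≤ ∑' k, q k := by
  rw [matchProb, ← tsum_mul_left]
  exact (summable_choose_mul_pow_succ_mul_one_sub_pow hq0 hq1 hq r m).tsum_le_tsum
    (fun k => choose_mul_pow_succ_mul_one_sub_pow_le (hq0 k) (hq1 k) r m) hq

theorem abs_matchProb_mul_div_le (hq0 : ∀ k, 0 ≤ q k) (hq : HasSum q 1) (r m : ℕ) {s w : ℝ}
    (hs : 0 ≤ s) (hw : 0 ≤ w) : |matchProb q r m * s / w| ≤ s / w := by
  have hq1 (k : κ) : q k ≤ 1 := le_hasSum hq k fun j _ => hq0 j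
  have h0 := matchProb_nonneg hq0 hq1 r m
  have h1 := matchProb_le_tsum hq0 hq1 hq.summable r m
  rw [hq.tsum_eq] at h1
  rw [abs_of_nonneg (by positivity)]
  gcongr
  exact mul_le_of_le_one_left hs h1

/-- The derivative in `u` of `u ^ (r + 1) * (1 - u / m) ^ (m - r)`, the summand of `matchProb`
written in the variable `u = m * q k`. -/
noncomputable def matchKernel (r m : ℕ) (u : ℝ) : ℝ :=
  (r + 1) * u ^ r * (1 - u / m) ^ (m - r) -
    (m - r : ℕ) / m * u ^ (r + 1) * (1 - u / m) ^ (m - (r + 1))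

theorem hasDerivAt_matchKernel (r m : ℕ) (u : ℝ) :
    HasDerivAt (fun u : ℝ => u ^ (r + 1) * (1 - u / m) ^ (m - r)) (matchKernel r m u) u := by
  have h1 : HasDerivAt (fun u : ℝ => 1 - u / m) (-(1 / m)) u :=
    ((hasDerivAt_id u).div_const (m : ℝ)).const_sub 1
  refine ((hasDerivAt_pow (r + 1) u).mul (h1.pow (m - r))).congr_deriv ?_
  rw [matchKernel, ← Nat.sub_sub]
  push_cast [Pi.pow_apply, Nat.add_sub_cancel]
  ring

theorem continuous_matchKernel (r m : ℕ) : Continuous (matchKernel r m) := by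
  unfold matchKernel
  fun_prop

theorem tendsto_natCast_sub_div (r : ℕ) :
    Tendsto (fun m : ℕ => ((m - r : ℕ) : ℝ) / m) atTop (𝓝 1) := by
  have h := (tendsto_const_nhds (x := (1 : ℝ))).sub (tendsto_const_div_atTop_nhds_zero_nat (r : ℝ))
  rw [sub_zero] at h
  refine h.congr' ?_
  filter_upwards [eventually_ge_atTop r, eventually_gt_atTop 0] with m hm hm0
  rw [Nat.cast_sub hm, sub_div, div_self (Nat.cast_ne_zero.2 hm0.ne')]

theorem tendsto_one_sub_div_pow_sub (u : ℝ) (r : ℕ) :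
    Tendsto (fun m : ℕ => (1 - u / m) ^ (m - r)) atTop (𝓝 (Real.exp (-u))) := by
  have hlim : Tendsto (fun m : ℕ => (1 - u / m) ^ m / (1 - u / m) ^ r) atTop
      (𝓝 (Real.exp (-u))) := by
    have h1 := (tendsto_const_nhds (x := (1 : ℝ))).sub (tendsto_const_div_atTop_nhds_zero_nat u)
    have h2 := Real.tendsto_one_add_div_pow_exp (-u)
    simp only [neg_div, ← sub_eq_add_neg] at h2
    have h3 := h2.div (h1.pow r) (by simp)
    rwa [sub_zero, one_pow, div_one] at h3
  refine hlim.congr' ?_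
  filter_upwards [eventually_ge_atTop r, eventually_gt_atTop 0,
    tendsto_natCast_atTop_atTop.eventually_gt_atTop u] with m hm hm0 hmu
  have h1u : 1 - u / m ≠ 0 := (sub_pos.2 ((div_lt_one (Nat.cast_pos.2 hm0)).2 hmu)).ne'
  rw [div_eq_iff (pow_ne_zero r h1u), ← pow_add, Nat.sub_add_cancel hm]

theorem tendsto_matchKernel (r : ℕ) (u : ℝ) :
    Tendsto (fun m => matchKernel r m u) atTop
      (𝓝 (((r + 1) * u ^ r - u ^ (r + 1)) * Real.exp (-u))) := by
  have h := ((tendsto_one_sub_div_pow_sub u r).const_mul ((r + 1) * u ^ r)).sub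
    (((tendsto_natCast_sub_div r).mul_const (u ^ (r + 1))).mul
      (tendsto_one_sub_div_pow_sub u (r + 1)))
  rwa [one_mul, ← sub_mul] at h

theorem abs_one_sub_div_pow_le {u : ℝ} {m i : ℕ} (hu0 : 0 ≤ u) (hum : u ≤ m) (hi : m ≤ 2 * i) :
    |(1 - u / m) ^ i| ≤ Real.exp (-(1 / 2) * u) := by
  have h0 : 0 ≤ 1 - u / m := sub_nonneg.2 (div_le_one_of_le₀ hum (Nat.cast_nonneg m))
  have hexp : 1 - u / m ≤ Real.exp (-(u / m)) := Real.one_sub_le_exp_neg _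
  rw [abs_of_nonneg (pow_nonneg h0 i)]
  refine (pow_le_pow_left₀ h0 hexp i).trans ?_
  rw [← Real.exp_nat_mul, Real.exp_le_exp]
  rcases m.eq_zero_or_pos with rfl | hm
  · have : u = 0 := le_antisymm (by simpa using hum) hu0
    simp [this]
  · have hm' : (0 : ℝ) < m := Nat.cast_pos.2 hm
    have hi' : (m : ℝ) ≤ 2 * i := by exact_mod_cast hi
    have hhalf : 1 / 2 ≤ (i : ℝ) / m := by rw [le_div_iff₀ hm']; linarith
    calc (i : ℝ) * -(u / m) = -(i / m * u) := by ring
      _ ≤ -(1 / 2 * u) := neg_le_neg (mul_le_mul_of_nonneg_right hhalf hu0)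
      _ = -(1 / 2) * u := by ring

theorem abs_matchKernel_le {r m : ℕ} {u : ℝ} (hu0 : 0 ≤ u) (hum : u ≤ m)
    (hrm : 2 * (r + 1) ≤ m) :
    |matchKernel r m u| ≤ ((r + 1) * u ^ r + u ^ (r + 1)) * Real.exp (-(1 / 2) * u) := by
  have hfrac : ((m - r : ℕ) : ℝ) / m ≤ 1 :=
    div_le_one_of_le₀ (Nat.cast_le.2 (Nat.sub_le m r)) (Nat.cast_nonneg m)
  rw [matchKernel, add_mul _ (u ^ (r + 1))]
  refine (abs_sub _ _).trans (add_le_add ?_ ?_)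
  · rw [abs_mul, abs_of_nonneg (by positivity : 0 ≤ ((r : ℝ) + 1) * u ^ r)]
    gcongr
    exact abs_one_sub_div_pow_le hu0 hum (by lia)
  · rw [abs_mul, abs_of_nonneg (by positivity : 0 ≤ ((m - r : ℕ) : ℝ) / m * u ^ (r + 1))]
    refine mul_le_mul (mul_le_of_le_one_left (by positivity) hfrac)
      (abs_one_sub_div_pow_le hu0 hum (by lia)) (abs_nonneg _) (by positivity)

theorem matchProb_mul_eq_integral [Countable κ] (hq0 : ∀ k, 0 ≤ q k) (hq : Summable q) (r : ℕ)
    {m : ℕ} (hm : 0 < m) :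
    matchProb q r m * m =
      m.choose r / (m : ℝ) ^ r * ∫ u in Set.Ioi 0, matchKernel r m u * countingFn q (u / m) := by
  have hm' : (0 : ℝ) < m := Nat.cast_pos.2 hm
  have hint := tsum_comp_eq_integral_mul_countingFn (q := fun k => m * q k)
    (fun k => mul_nonneg hm'.le (hq0 k)) (hq.mul_left _) (hasDerivAt_matchKernel r m)
    (continuous_matchKernel r m) (by simp)
  simp only [countingFn_const_mul q hm', mul_div_cancel_left₀ _ hm'.ne', mul_pow, mul_assoc,
    tsum_mul_left] at hint
  rw [matchProb, ← hint]
  field_simp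
  ring

end MatchProbability

section MatchProbabilityAsymptotics

theorem integrableOn_rpow_mul_exp_neg_mul {s b : ℝ} (hs : -1 < s) (hb : 0 < b) :
    IntegrableOn (fun u => u ^ s * Real.exp (-b * u)) (Set.Ioi 0) := by
  simpa only [Real.rpow_one] using integrableOn_rpow_mul_exp_neg_mul_rpow hs one_pos hb

theorem integrableOn_matchKernel_bound {β : ℝ} (hβ : β < 1) (r : ℕ) :
    IntegrableOn (fun u : ℝ => ((r + 1) * u ^ r + u ^ (r + 1)) * Real.exp (-(1 / 2) * u) *
      (u ^ (-β) + 1)) (Set.Ioi 0) := by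
  have : (0 : ℝ) ≤ r := Nat.cast_nonneg r
  have hint (s : ℝ) (hs : -1 < s) :
      IntegrableOn (fun u => u ^ s * Real.exp (-(1 / 2) * u)) (Set.Ioi 0) :=
    integrableOn_rpow_mul_exp_neg_mul hs one_half_pos
  have h0 := (hint (-β + r) (by linarith)).add (hint r (by linarith))
  have h1 := (hint (-β + (r + 1 : ℕ)) (by push_cast; linarith)).add
    (hint (r + 1 : ℕ) (by push_cast; linarith))
  refine IntegrableOn.congr_fun ((h0.const_mul (r + 1)).add h1) ?_ measurableSet_Ioi
  intro u (hu : 0 < u)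
  simp only [Pi.add_apply, Real.rpow_add_natCast hu.ne', Real.rpow_natCast]
  ring

theorem integral_matchKernel_limit {α : ℝ} (hα : α < 1) (r : ℕ) :
    ∫ u in Set.Ioi 0, ((r + 1) * u ^ r - u ^ (r + 1)) * Real.exp (-u) * u ^ (-α) =
      α * Real.Gamma (r + 1 - α) := by
  have hs : 0 < (r : ℝ) + 1 - α := by linarith [(Nat.cast_nonneg r : (0 : ℝ) ≤ r)]
  calc ∫ u in Set.Ioi 0, ((r + 1) * u ^ r - u ^ (r + 1)) * Real.exp (-u) * u ^ (-α)
      = ∫ u in Set.Ioi 0, ((r + 1) * (Real.exp (-u) * u ^ ((r : ℝ) + 1 - α - 1)) -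
          Real.exp (-u) * u ^ ((r : ℝ) + 1 - α + 1 - 1)) := by
        refine setIntegral_congr_fun measurableSet_Ioi fun u (hu : 0 < u) => ?_
        have hr0 : (r : ℝ) + 1 - α - 1 = -α + r := by ring
        have hr1 : (r : ℝ) + 1 - α + 1 - 1 = -α + (r + 1 : ℕ) := by push_cast; ring
        simp only [hr0, hr1, Real.rpow_add_natCast hu.ne']
        ring
    _ = (r + 1) * Real.Gamma (r + 1 - α) - Real.Gamma (r + 1 - α + 1) := by
        rw [integral_sub ((Real.GammaIntegral_convergent hs).const_mul _)
          (Real.GammaIntegral_convergent (by linarith)), integral_const_mul,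
          Real.Gamma_eq_integral hs, Real.Gamma_eq_integral (by linarith)]
    _ = α * Real.Gamma (r + 1 - α) := by rw [Real.Gamma_add_one hs.ne']; ring

theorem tendsto_choose_div_pow (r : ℕ) :
    Tendsto (fun m : ℕ => (m.choose r : ℝ) / (m : ℝ) ^ r) atTop (𝓝 (1 / r.factorial)) := by
  have hne : ∀ᶠ m : ℕ in atTop, (m : ℝ) ^ r / r.factorial ≠ 0 := by
    filter_upwards [eventually_ne_atTop 0] with m hm
    positivity
  have h := (((Asymptotics.isEquivalent_iff_tendsto_one hne).1 (isEquivalent_choose r)).div_const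
    (r.factorial : ℝ))
  refine h.congr fun m => ?_
  simp only [Pi.div_apply]
  field_simp

variable {κ : Type*} [Countable κ] {q : κ → ℝ} {α D : ℝ} {W : ℝ → ℝ}

theorem tendsto_matchProb_mul_div (hq0 : ∀ k, 0 ≤ q k) (hq1 : ∀ k, q k ≤ 1) (hq : Summable q)
    (hα : 0 < α) (hα1 : α < 1) (hW : RegularlyVarying α W) (hpos : ∀ᶠ x in atTop, 0 < W x)
    (hqW : Tendsto (fun x => countingFn q (1 / x) / W x) atTop (𝓝 D)) (r : ℕ) :
    Tendsto (fun m : ℕ => matchProb q r m * m / W m) atTop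
      (𝓝 (D * (α * Real.Gamma (r + 1 - α) / r.factorial))) := by
  obtain ⟨β, hαβ, hβ1⟩ := exists_between hα1
  have hbound : ∀ᶠ m : ℕ in atTop, ∀ u : ℝ, 0 < u → u ≤ m → |matchKernel r m u| ≤
      ((r + 1) * u ^ r + u ^ (r + 1)) * Real.exp (-(1 / 2) * u) := by
    filter_upwards [eventually_ge_atTop (2 * (r + 1))] with m hm u hu hum
    exact abs_matchKernel_le hu.le hum hm
  have hint := hW.tendsto_integral_mul_comp_div_div hpos hα hαβ (antitoneOn_countingFn hq0 hq)
    (fun u hu => countingFn_eq_zero fun k => (hq1 k).trans_lt hu) hqW (continuous_matchKernel r)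
    hbound (integrableOn_matchKernel_bound hβ1 r) (fun u hu => by positivity)
    fun u _ => tendsto_matchKernel r u
  rw [integral_matchKernel_limit hα1] at hint
  have h := (tendsto_choose_div_pow r).mul hint
  rw [mul_left_comm, one_div_mul_eq_div] at h
  refine h.congr' ?_
  filter_upwards [eventually_gt_atTop 0] with m hm
  rw [matchProb_mul_eq_integral hq0 hq r hm, mul_div_assoc]

/-- The filter of pairs `(n, m)` with `n → ∞` and `m / n → c`. -/
noncomputable def ratioFilter (c : ℝ) : Filter (ℕ × ℕ) :=
  comap Prod.fst atTop ⊓ comap (fun z => (z.2 : ℝ) / z.1) (𝓝 c)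

theorem tendsto_fst_ratioFilter (c : ℝ) : Tendsto Prod.fst (ratioFilter c) atTop :=
  tendsto_comap.mono_left inf_le_left

theorem tendsto_div_ratioFilter (c : ℝ) :
    Tendsto (fun z : ℕ × ℕ => (z.2 : ℝ) / z.1) (ratioFilter c) (𝓝 c) :=
  tendsto_comap.mono_left inf_le_right

theorem tendsto_snd_ratioFilter {c : ℝ} (hc : 0 < c) :
    Tendsto Prod.snd (ratioFilter c) atTop := by
  refine (tendsto_natCast_atTop_iff (R := ℝ)).1 <| ((tendsto_div_ratioFilter c).pos_mul_atTop hc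
    (tendsto_natCast_atTop_atTop.comp (tendsto_fst_ratioFilter c))).congr' ?_
  filter_upwards [(tendsto_fst_ratioFilter c).eventually_ne_atTop 0] with z hz
  exact div_mul_cancel₀ _ (Nat.cast_ne_zero.2 hz)

theorem tendsto_matchProb_mul_div_ratioFilter (hq0 : ∀ k, 0 ≤ q k) (hq1 : ∀ k, q k ≤ 1)
    (hq : Summable q) (hα : 0 < α) (hα1 : α < 1) (hW : RegularlyVarying α W)
    (hpos : ∀ᶠ x in atTop, 0 < W x)
    (hqW : Tendsto (fun x => countingFn q (1 / x) / W x) atTop (𝓝 D)) {c : ℝ} (hc : 0 < c)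
    (hWc : Tendsto (fun z : ℕ × ℕ => W z.2 / W z.1) (ratioFilter c) (𝓝 (c ^ α))) (r : ℕ) :
    Tendsto (fun z : ℕ × ℕ => matchProb q r z.2 * z.1 / W z.1) (ratioFilter c)
      (𝓝 (c ^ (α - 1) * (D * (α * Real.Gamma (r + 1 - α) / r.factorial)))) := by
  have hsnd := tendsto_snd_ratioFilter hc
  have h := (hWc.div (tendsto_div_ratioFilter c) hc.ne').mul
    ((tendsto_matchProb_mul_div hq0 hq1 hq hα hα1 hW hpos hqW r).comp hsnd)
  rw [← Real.rpow_sub_one hc.ne'] at h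
  refine h.congr' ?_
  filter_upwards [hsnd.eventually_ne_atTop 0, (tendsto_fst_ratioFilter c).eventually_ne_atTop 0,
    (tendsto_natCast_atTop_atTop.comp hsnd).eventually hpos] with z hz2 hz1 hWz
  have hWz' : W z.2 ≠ 0 := hWz.ne'
  have hz2' : (z.2 : ℝ) ≠ 0 := Nat.cast_ne_zero.2 hz2
  have hz1' : (z.1 : ℝ) ≠ 0 := Nat.cast_ne_zero.2 hz1
  simp only [Pi.div_apply, Function.comp_apply]
  field_simp

end MatchProbabilityAsymptotics

section StochasticMatrix

variable {A : Type*} [Fintype A]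

theorem norm_mulVec_le {K : Matrix A A ℝ} {s : ℝ} (hK : ∀ a b, 0 ≤ K a b)
    (hsum : ∀ a, ∑ b, K a b = s) (hs : 0 ≤ s) (g : A → ℝ) : ‖K *ᵥ g‖ ≤ s * ‖g‖ := by
  refine (pi_norm_le_iff_of_nonneg (mul_nonneg hs (norm_nonneg g))).2 fun a => ?_
  calc ‖∑ b, K a b * g b‖ ≤ ∑ b, ‖K a b * g b‖ := norm_sum_le _ _
    _ ≤ ∑ b, K a b * ‖g‖ := sum_le_sum fun b _ => by
      rw [norm_mul, Real.norm_of_nonneg (hK a b)]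
      exact mul_le_mul_of_nonneg_left (norm_le_pi_norm g b) (hK a b)
    _ = s * ‖g‖ := by rw [← sum_mul, hsum]

theorem summable_of_comp_add_le_mul {u : ℕ → ℝ} {k : ℕ} {ρ : ℝ} (hu : ∀ t, 0 ≤ u t)
    (hρ : ρ < 1) (h : ∀ t, u (k + t) ≤ ρ * u t) : Summable u := by
  set S := fun n => ∑ t ∈ range n, u t with hS
  refine summable_of_sum_range_le (c := S k / (1 - ρ)) hu fun n => ?_
  rw [le_div_iff₀ (sub_pos.2 hρ)]
  have hmono : S n ≤ S (k + n) :=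
    sum_le_sum_of_subset_of_nonneg (range_subset_range.2 (Nat.le_add_left n k)) fun t _ _ => hu t
  have hstep : S (k + n) ≤ S k + ρ * S n := by
    simp only [hS, sum_range_add, mul_sum]
    gcongr with t
    exact h t
  change S n * (1 - ρ) ≤ S k
  linarith

variable [DecidableEq A] {M : Matrix A A ℝ} {π : A → ℝ}

/- Doeblin's minorization: the part `ε π` of `M` acts on functions as integration against `π`,
which vanishes on centred ones. -/
theorem norm_mulVec_le_one_sub_mul (hM : M ∈ Matrix.rowStochastic ℝ A)
    (hπ : π ∈ stdSimplex ℝ A) {ε : ℝ} (hε : ∀ a b, ε * π b ≤ M a b) {g : A → ℝ}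
    (hg : π ⬝ᵥ g = 0) : ‖M *ᵥ g‖ ≤ (1 - ε) * ‖g‖ := by
  set K : Matrix A A ℝ := M - Matrix.of fun _ b => ε * π b
  have hK (a b : A) : 0 ≤ K a b := sub_nonneg.2 (hε a b)
  have hsum (a : A) : ∑ b, K a b = 1 - ε := by
    simp only [K, Matrix.sub_apply, Matrix.of_apply, sum_sub_distrib, ← mul_sum, hπ.2, mul_one,
      Matrix.sum_row_of_mem_rowStochastic hM]
  have hKg : K *ᵥ g = M *ᵥ g := by
    ext a
    have hzero : (Matrix.of fun _ b => ε * π b : Matrix A A ℝ) *ᵥ g = 0 := by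
      ext a
      simp only [Matrix.mulVec, dotProduct, Matrix.of_apply, mul_assoc, ← mul_sum]
      exact mul_eq_zero_of_right ε hg
    rw [Matrix.sub_mulVec, hzero, sub_zero]
  obtain ⟨a⟩ : Nonempty A := by
    by_contra hA
    rw [not_nonempty_iff] at hA
    simpa using hπ.2
  rw [← hKg]
  exact norm_mulVec_le hK hsum (hsum a ▸ sum_nonneg fun b _ => hK a b) g

theorem dotProduct_pow_mulVec (hstat : π ᵥ* M = π) (t : ℕ) (g : A → ℝ) :
    π ⬝ᵥ (M ^ t *ᵥ g) = π ⬝ᵥ g := by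
  induction t with
  | zero => rw [pow_zero, Matrix.one_mulVec]
  | succ t ih =>
    rw [pow_succ', ← Matrix.mulVec_mulVec, Matrix.dotProduct_mulVec, hstat, ih]

theorem summable_norm_pow_mulVec (hM : M ∈ Matrix.rowStochastic ℝ A) (hπ : π ∈ stdSimplex ℝ A)
    (hstat : π ᵥ* M = π) {k : ℕ} (hk : ∀ a b, 0 < (M ^ k) a b) {f : A → ℝ} (hf : π ⬝ᵥ f = 0) :
    Summable fun t => ‖M ^ t *ᵥ f‖ := by
  have hπ1 (b : A) : π b ≤ 1 := hπ.2 ▸ single_le_sum (fun i _ => hπ.1 i) (mem_univ b)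
  obtain ⟨ε, hε0, hε⟩ : ∃ ε > 0, ∀ a b, ε * π b ≤ (M ^ k) a b := by
    obtain ⟨ε, hε0, hε⟩ := Pi.exists_forall_pos_add_lt (x := fun _ : A × A => (0 : ℝ))
      (y := fun z => (M ^ k) z.1 z.2) fun z => hk z.1 z.2
    exact ⟨ε, hε0, fun a b =>
      (mul_le_of_le_one_right hε0.le (hπ1 b)).trans (zero_add ε ▸ (hε (a, b)).le)⟩
  refine summable_of_comp_add_le_mul (k := k) (fun t => norm_nonneg _) (sub_lt_self 1 hε0)
    fun t => ?_
  rw [pow_add, ← Matrix.mulVec_mulVec]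
  exact norm_mulVec_le_one_sub_mul (pow_mem hM k) hπ hε
    ((dotProduct_pow_mulVec hstat t f).trans hf)

end StochasticMatrix

section PathExpectation

variable {A : Type*}

/-- The probability that a Markov chain with initial distribution `η` and transition matrix `M`
follows the path `x` up to time `n`. -/
def pathWeight (M : Matrix A A ℝ) (η : A → ℝ) {n : ℕ} (x : Fin (n + 1) → A) : ℝ :=
  η (x 0) * ∏ i : Fin n, M (x i.castSucc) (x i.succ)

/-- The expectation of a functional `F` of the path up to time `n` of a Markov chain with initial
distribution `η` and transition matrix `M`. -/
def pathExp [Fintype A] (M : Matrix A A ℝ) (η : A → ℝ) (n : ℕ) (F : (Fin (n + 1) → A) → ℝ) : ℝ :=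
  ∑ x, pathWeight M η x * F x

/-- The additive functional `∑ f (X i)` over the times `i < n`, excluding the final time `n`. -/
def pathSum (f : A → ℝ) {n : ℕ} (x : Fin (n + 1) → A) : ℝ :=
  ∑ i : Fin n, f (x i.castSucc)

/-- The number of visits to `a` at the times `i < n`, excluding the final time `n`. -/
def visits [DecidableEq A] (a : A) {n : ℕ} (x : Fin (n + 1) → A) : ℕ :=
  #{i : Fin n | x i.castSucc = a}

theorem pathSum_succ (f : A → ℝ) {n : ℕ} (x : Fin (n + 2) → A) :
    pathSum f x = pathSum f (Fin.init x) + f (Fin.init x (Fin.last n)) :=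
  Fin.sum_univ_castSucc _

theorem pathSum_ite_sub [DecidableEq A] (a : A) (c : ℝ) {n : ℕ} (x : Fin (n + 1) → A) :
    pathSum (fun b => (if b = a then 1 else 0) - c) x = visits a x - n * c := by
  simp only [pathSum, visits, sum_sub_distrib, sum_boole, sum_const, card_univ, Fintype.card_fin,
    nsmul_eq_mul]

theorem pathWeight_snoc (M : Matrix A A ℝ) (η : A → ℝ) {n : ℕ} (x : Fin (n + 1) → A) (b : A) :
    pathWeight M η (Fin.snoc x b : Fin (n + 2) → A) =
      pathWeight M η x * M (x (Fin.last n)) b := by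
  have h0 : (Fin.snoc x b : Fin (n + 2) → A) 0 = x 0 := Fin.snoc_castSucc (α := fun _ => A) b x 0
  simp only [pathWeight, h0, Fin.prod_univ_castSucc, Fin.snoc_castSucc, Fin.succ_castSucc,
    Fin.succ_last, Fin.snoc_last, mul_assoc]

theorem pathWeight_nonneg {M : Matrix A A ℝ} {η : A → ℝ} (hM : ∀ a b, 0 ≤ M a b)
    (hη : ∀ a, 0 ≤ η a) {n : ℕ} (x : Fin (n + 1) → A) : 0 ≤ pathWeight M η x :=
  mul_nonneg (hη _) (prod_nonneg fun _ _ => hM _ _)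

variable [Fintype A] (M : Matrix A A ℝ) (η : A → ℝ)

theorem pathExp_add (n : ℕ) (F G : (Fin (n + 1) → A) → ℝ) :
    pathExp M η n (fun x => F x + G x) = pathExp M η n F + pathExp M η n G := by
  simp only [pathExp, mul_add, sum_add_distrib]

theorem pathExp_const_mul (n : ℕ) (c : ℝ) (F : (Fin (n + 1) → A) → ℝ) :
    pathExp M η n (fun x => c * F x) = c * pathExp M η n F := by
  simp only [pathExp, mul_left_comm _ c, mul_sum]

theorem pathExp_succ_mul (n : ℕ) (G : (Fin (n + 1) → A) → ℝ) (g : A → ℝ) :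
    pathExp M η (n + 1) (fun x => G (Fin.init x) * g (x (Fin.last (n + 1)))) =
      pathExp M η n fun x => G x * (M *ᵥ g) (x (Fin.last n)) := by
  rw [pathExp, ← (Fin.snocEquiv fun _ : Fin (n + 2) => A).sum_comp, Fintype.sum_prod_type_right]
  refine sum_congr rfl fun x _ => ?_
  have hsnoc (b : A) : (Fin.snocEquiv fun _ : Fin (n + 2) => A) (b, x) =
    (Fin.snoc x b : Fin (n + 2) → A) := rfl
  simp only [hsnoc, pathWeight_snoc, Fin.init_snoc (α := fun _ => A),
    Fin.snoc_last (α := fun _ => A), Matrix.mulVec, dotProduct, mul_sum]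
  exact sum_congr rfl fun b _ => by ring

theorem pathExp_last [DecidableEq A] (n : ℕ) (g : A → ℝ) :
    pathExp M η n (fun x => g (x (Fin.last n))) = η ⬝ᵥ (M ^ n *ᵥ g) := by
  induction n generalizing g with
  | zero =>
    rw [pathExp, ← (Equiv.funUnique (Fin 1) A).symm.sum_comp]
    simp [pathWeight, dotProduct]
  | succ n ih =>
    have h := pathExp_succ_mul M η n (fun _ => 1) g
    simp only [one_mul] at h
    rw [h, ih, Matrix.mulVec_mulVec, ← pow_succ]

variable {M η}

theorem pathExp_mono (hM : ∀ a b, 0 ≤ M a b) (hη : ∀ a, 0 ≤ η a) {n : ℕ}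
    {F G : (Fin (n + 1) → A) → ℝ} (h : ∀ x, F x ≤ G x) : pathExp M η n F ≤ pathExp M η n G :=
  sum_le_sum fun x _ => mul_le_mul_of_nonneg_left (h x) (pathWeight_nonneg hM hη x)

theorem abs_pathExp_le (hM : ∀ a b, 0 ≤ M a b) (hη : ∀ a, 0 ≤ η a) (n : ℕ)
    (F : (Fin (n + 1) → A) → ℝ) : |pathExp M η n F| ≤ pathExp M η n fun x => |F x| := by
  refine (abs_sum_le_sum_abs _ _).trans_eq (sum_congr rfl fun x _ => ?_)
  rw [abs_mul, abs_of_nonneg (pathWeight_nonneg hM hη x)]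

theorem pathExp_comp_init (hM : M *ᵥ 1 = 1) (n : ℕ) (G : (Fin (n + 1) → A) → ℝ) :
    pathExp M η (n + 1) (fun x => G (Fin.init x)) = pathExp M η n G := by
  have h := pathExp_succ_mul M η n G 1
  rw [hM] at h
  simpa only [Pi.one_apply, mul_one] using h

variable [DecidableEq A] (hM : M ∈ Matrix.rowStochastic ℝ A) (hη : η ∈ stdSimplex ℝ A)
include hM hη

theorem pathExp_const (n : ℕ) (c : ℝ) : pathExp M η n (fun _ => c) = c := by
  refine (pathExp_last M η n fun _ => c).trans ?_
  have hc : (fun _ : A => c) = c • (1 : A → ℝ) := by ext; simp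
  rw [hc, Matrix.mulVec_smul, (pow_mem hM n).2, dotProduct_smul, dotProduct_one, hη.2,
    smul_eq_mul, mul_one]

theorem abs_pathExp_le_of_abs_le {n : ℕ} {F : (Fin (n + 1) → A) → ℝ} {c : ℝ}
    (h : ∀ x, |F x| ≤ c) : |pathExp M η n F| ≤ c :=
  (abs_pathExp_le hM.1 hη.1 n F).trans <|
    (pathExp_mono hM.1 hη.1 h).trans_eq (pathExp_const hM hη n c)

theorem abs_pathExp_pathSum_mul_le (f g : A → ℝ) (n : ℕ) :
    |pathExp M η n fun x => pathSum f x * g (x (Fin.last n))| ≤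
      ‖f‖ * ∑ t ∈ range n, ‖M ^ (t + 1) *ᵥ g‖ := by
  induction n generalizing g with
  | zero => simp [pathSum, pathExp]
  | succ n ih =>
    have hsplit : (pathExp M η (n + 1) fun x => pathSum f x * g (x (Fin.last (n + 1)))) =
        (pathExp M η n fun x => pathSum f x * (M *ᵥ g) (x (Fin.last n))) +
          pathExp M η n fun x => f (x (Fin.last n)) * (M *ᵥ g) (x (Fin.last n)) := by
      simp only [pathSum_succ]
      rw [pathExp_succ_mul M η n (fun y => pathSum f y + f (y (Fin.last n))), ← pathExp_add]
      simp only [add_mul]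
    have hlast : |pathExp M η n fun x => f (x (Fin.last n)) * (M *ᵥ g) (x (Fin.last n))| ≤
        ‖f‖ * ‖M *ᵥ g‖ := by
      refine abs_pathExp_le_of_abs_le hM hη fun x => ?_
      rw [abs_mul]
      exact mul_le_mul (norm_le_pi_norm f _) (norm_le_pi_norm (M *ᵥ g) _) (abs_nonneg _)
        (norm_nonneg f)
    have hpast := ih (M *ᵥ g)
    simp only [Matrix.mulVec_mulVec, ← pow_succ] at hpast hlast
    rw [hsplit, sum_range_succ', mul_add, zero_add, pow_one]
    exact (abs_add_le _ _).trans (add_le_add hpast hlast)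

theorem pathExp_pathSum_sq_le {f : A → ℝ} (hf : Summable fun t => ‖M ^ t *ᵥ f‖) (n : ℕ) :
    (pathExp M η n fun x => pathSum f x ^ 2) ≤ 2 * ‖f‖ * (∑' t, ‖M ^ t *ᵥ f‖) * n := by
  induction n with
  | zero => simp [pathSum, pathExp]
  | succ n ih =>
    have hsplit : (pathExp M η (n + 1) fun x => pathSum f x ^ 2) =
        (pathExp M η n fun x => pathSum f x ^ 2) +
          2 * (pathExp M η n fun x => pathSum f x * f (x (Fin.last n))) +
            pathExp M η n fun x => f (x (Fin.last n)) ^ 2 := by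
      simp only [pathSum_succ]
      rw [pathExp_comp_init hM.2 n fun y => (pathSum f y + f (y (Fin.last n))) ^ 2,
        ← pathExp_const_mul, ← pathExp_add, ← pathExp_add]
      simp only [add_sq, mul_assoc]
    have hlast : (pathExp M η n fun x => f (x (Fin.last n)) ^ 2) ≤ ‖f‖ ^ 2 := by
      refine (le_abs_self _).trans (abs_pathExp_le_of_abs_le hM hη fun x => ?_)
      rw [abs_pow]
      exact pow_le_pow_left₀ (abs_nonneg _) (norm_le_pi_norm f _) 2
    have hcross := (le_abs_self _).trans (abs_pathExp_pathSum_mul_le hM hη f f n)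
    have htsum : ∑ t ∈ range n, ‖M ^ (t + 1) *ᵥ f‖ ≤ (∑' t, ‖M ^ t *ᵥ f‖) - ‖f‖ := by
      have h := hf.sum_le_tsum (range (n + 1)) fun t _ => norm_nonneg _
      rw [sum_range_succ', pow_zero, Matrix.one_mulVec] at h
      exact le_sub_right_of_add_le h
    have hcross' := hcross.trans (mul_le_mul_of_nonneg_left htsum (norm_nonneg f))
    rw [hsplit, Nat.cast_succ]
    linarith [sq_nonneg ‖f‖]

end PathExpectation

section Ergodicity

theorem exists_abs_sub_le_add_sq {φ : ℕ → ℕ → ℝ} {c L ε : ℝ}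
    (hφ : Tendsto (fun z : ℕ × ℕ => φ z.1 z.2) (ratioFilter c) (𝓝 L)) (hε : 0 < ε) :
    ∃ δ > 0, ∀ᶠ n : ℕ in atTop, ∀ m : ℕ,
      |φ n m - L| ≤ ε + |φ n m - L| * ((m / n - c) / δ) ^ 2 := by
  obtain ⟨⟨N, δ⟩, ⟨-, hδ⟩, h⟩ :=
    ((atTop_basis.comap _).inf (Metric.nhds_basis_ball.comap _)).mem_iff.1
      (hφ.eventually (Metric.ball_mem_nhds L hε))
  refine ⟨δ, hδ, (eventually_ge_atTop N).mono fun n hn m => ?_⟩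
  rcases lt_or_ge |m / n - c| δ with hm | hm
  · have hclose : |φ n m - L| < ε := @h (n, m) ⟨hn, hm⟩
    exact hclose.le.trans (le_add_of_nonneg_right (by positivity))
  · have hsq : 1 ≤ ((m / n - c) / δ) ^ 2 := by
      rw [one_le_sq_iff_one_le_abs, abs_div, abs_of_pos hδ]
      exact (one_le_div hδ).2 hm
    linarith [le_mul_of_one_le_right (abs_nonneg (φ n m - L)) hsq]

variable {A : Type*} [Fintype A] [DecidableEq A] {M : Matrix A A ℝ} {π η : A → ℝ}
  (hM : M ∈ Matrix.rowStochastic ℝ A) (hπ : π ∈ stdSimplex ℝ A) (hη : η ∈ stdSimplex ℝ A)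
  (hstat : π ᵥ* M = π) {k : ℕ} (hk : ∀ a b, 0 < (M ^ k) a b)
include hM hπ hη hstat hk

theorem tendsto_pathExp_last (g : A → ℝ) :
    Tendsto (fun n => pathExp M η n fun x => g (x (Fin.last n))) atTop (𝓝 (π ⬝ᵥ g)) := by
  set f : A → ℝ := g - (π ⬝ᵥ g) • 1 with hf
  have hπf : π ⬝ᵥ f = 0 := by
    rw [hf, dotProduct_sub, dotProduct_smul, dotProduct_one, hπ.2, smul_eq_mul, mul_one, sub_self]
  have hlim : Tendsto (fun n => M ^ n *ᵥ f) atTop (𝓝 0) := tendsto_zero_iff_norm_tendsto_zero.2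
    (summable_norm_pow_mulVec hM hπ hstat hk hπf).tendsto_atTop_zero
  have hdot : Tendsto (fun n => η ⬝ᵥ (M ^ n *ᵥ f)) atTop (𝓝 0) := by
    simpa only [dotProduct, Pi.zero_apply, mul_zero, sum_const_zero] using
      tendsto_finsetSum univ fun a _ => (tendsto_pi_nhds.1 hlim a).const_mul (η a)
  have h := hdot.add_const (π ⬝ᵥ g)
  rw [zero_add] at h
  refine h.congr fun n => ?_
  rw [pathExp_last, hf, Matrix.mulVec_sub, Matrix.mulVec_smul, (pow_mem hM n).2, dotProduct_sub,
    dotProduct_smul, dotProduct_one, hη.2, smul_eq_mul, mul_one, sub_add_cancel]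

theorem exists_pathExp_visits_sub_sq_le (a : A) : ∃ K : ℝ, ∀ n : ℕ,
    (pathExp M η n fun x => ((visits a x : ℝ) - n * π a) ^ 2) ≤ K * n := by
  set f : A → ℝ := fun b => (if b = a then 1 else 0) - π a with hf
  have hπf : π ⬝ᵥ f = 0 := by
    simp only [hf, dotProduct, mul_sub, sum_sub_distrib, mul_ite, mul_one, mul_zero,
      sum_ite_eq', mem_univ, if_true, ← sum_mul, hπ.2, one_mul, sub_self]
  refine ⟨2 * ‖f‖ * ∑' t, ‖M ^ t *ᵥ f‖, fun n => ?_⟩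
  simp only [← pathSum_ite_sub]
  exact pathExp_pathSum_sq_le hM hη (summable_norm_pow_mulVec hM hπ hstat hk hπf) n

theorem tendsto_pathExp_abs_sub {a : A} {φ : ℕ → ℕ → ℝ} {R : ℕ → ℝ} {L : ℝ}
    (hφ : Tendsto (fun z : ℕ × ℕ => φ z.1 z.2) (ratioFilter (π a)) (𝓝 L))
    (hR : Tendsto (fun n => R n / n) atTop (𝓝 0)) (hφR : ∀ᶠ n in atTop, ∀ m, |φ n m| ≤ R n) :
    Tendsto (fun n => pathExp M η n fun x => |φ n (visits a x) - L|) atTop (𝓝 0) := by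
  obtain ⟨K, hK⟩ := exists_pathExp_visits_sub_sq_le hM hπ hη hstat hk a
  refine tendsto_order.2 ⟨fun b hb => .of_forall fun n => hb.trans_le ?_, fun b hb => ?_⟩
  · simpa only [pathExp_const hM hη] using
      pathExp_mono (n := n) hM.1 hη.1 fun x => abs_nonneg (φ n (visits a x) - L)
  obtain ⟨δ, hδ, hle⟩ := exists_abs_sub_le_add_sq hφ (half_pos hb)
  have herr : Tendsto (fun n : ℕ => b / 2 + (R n / n + |L| / n) * (K / δ ^ 2)) atTop
      (𝓝 (b / 2)) := by
    have h := ((hR.add (tendsto_const_div_atTop_nhds_zero_nat |L|)).mul_const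
      (K / δ ^ 2)).const_add (b / 2)
    rwa [add_zero, zero_mul, add_zero] at h
  filter_upwards [herr.eventually_lt_const (half_lt_self hb), hle, hφR, eventually_gt_atTop 0]
    with n hn hle hφR hn0
  have : (0 : ℝ) < n := Nat.cast_pos.2 hn0
  refine lt_of_le_of_lt ?_ hn
  set B : ℝ := (R n + |L|) / (n * δ) ^ 2 with hB
  have hR0 : 0 ≤ R n := (abs_nonneg _).trans (hφR 0)
  calc (pathExp M η n fun x => |φ n (visits a x) - L|)
      ≤ pathExp M η n fun x => b / 2 + B * ((visits a x : ℝ) - n * π a) ^ 2 := by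
        refine pathExp_mono hM.1 hη.1 fun x => (hle _).trans (add_le_add_right ?_ _)
        have hscale : B * ((visits a x : ℝ) - n * π a) ^ 2 =
            (R n + |L|) * ((visits a x / n - π a) / δ) ^ 2 := by
          rw [hB]
          field_simp
        rw [hscale]
        gcongr
        exact (abs_sub _ _).trans (add_le_add_left (hφR _) _)
    _ = b / 2 + B * pathExp M η n fun x => ((visits a x : ℝ) - n * π a) ^ 2 := by
        rw [pathExp_add, pathExp_const hM hη, pathExp_const_mul]
    _ ≤ b / 2 + B * (K * n) := by
        gcongr
        exact hK n
    _ = b / 2 + (R n / n + |L| / n) * (K / δ ^ 2) := by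
        rw [hB]
        field_simp

theorem tendsto_pathExp_visits_last {φ : A → ℕ → ℕ → ℝ} {R : ℕ → ℝ} {L : A → ℝ}
    (hφ : ∀ a, Tendsto (fun z : ℕ × ℕ => φ a z.1 z.2) (ratioFilter (π a)) (𝓝 (L a)))
    (hR : Tendsto (fun n => R n / n) atTop (𝓝 0))
    (hφR : ∀ᶠ n in atTop, ∀ a m, |φ a n m| ≤ R n) :
    Tendsto (fun n => pathExp M η n fun x => φ (x (Fin.last n)) n (visits (x (Fin.last n)) x))
      atTop (𝓝 (π ⬝ᵥ L)) := by
  have hsum : Tendsto (fun n => ∑ a, pathExp M η n fun x => |φ a n (visits a x) - L a|) atTop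
      (𝓝 0) := by
    simpa only [sum_const_zero] using tendsto_finsetSum univ fun a _ =>
      tendsto_pathExp_abs_sub hM hπ hη hstat hk (hφ a) hR (hφR.mono fun n h => h a)
  have hdiff : Tendsto (fun n => pathExp M η n fun x =>
      φ (x (Fin.last n)) n (visits (x (Fin.last n)) x) - L (x (Fin.last n))) atTop (𝓝 0) := by
    refine squeeze_zero_norm (fun n => (abs_pathExp_le hM.1 hη.1 n _).trans ?_) hsum
    simp only [pathExp]
    rw [sum_comm]
    simp only [← mul_sum]
    exact pathExp_mono hM.1 hη.1 fun x => single_le_sum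
      (f := fun a => |φ a n (visits a x) - L a|) (fun a _ => abs_nonneg _) (mem_univ _)
  have h := hdiff.add (tendsto_pathExp_last hM hπ hη hstat hk L)
  simpa only [← pathExp_add, sub_add_cancel, zero_add] using h

end Ergodicity

section MatchingLetters

/- Subadditivity bounds `Y ⁻¹' B` and `Y ⁻¹' Bᶜ` from above; the two bounds add up to `1`, so both
are equalities, whether or not these preimages are measurable. -/
theorem measure_preimage_of_tsum_eq_one {Ω ι : Type*} [MeasurableSpace Ω] [Countable ι]
    {P : Measure Ω} [IsProbabilityMeasure P] {Y : Ω → ι} (h : ∑' i, P (Y ⁻¹' {i}) = 1)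
    (B : Set ι) : P (Y ⁻¹' B) = ∑' i : B, P (Y ⁻¹' {i.1}) := by
  have hle (B : Set ι) : P (Y ⁻¹' B) ≤ ∑' i : B, P (Y ⁻¹' {i.1}) := by
    rw [← Set.biUnion_preimage_singleton Y B]
    exact measure_biUnion_le P B.to_countable _
  have htotal : ∑' i : B, P (Y ⁻¹' {i.1}) + ∑' i : (Bᶜ : Set ι), P (Y ⁻¹' {i.1}) = 1 :=
    (ENNReal.summable.tsum_add_tsum_compl ENNReal.summable).trans h
  have hcompl : ∑' i : (Bᶜ : Set ι), P (Y ⁻¹' {i.1}) ≠ ∞ :=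
    ne_top_of_le_ne_top one_ne_top (htotal ▸ le_add_self)
  refine (hle B).antisymm ((ENNReal.add_le_add_iff_right hcompl).1 ?_)
  calc _ = P (Y ⁻¹' B ∪ Y ⁻¹' Bᶜ) := by
        rw [htotal, ← Set.preimage_union, Set.union_compl_self, Set.preimage_univ, measure_univ]
    _ ≤ P (Y ⁻¹' B) + P (Y ⁻¹' Bᶜ) := measure_union_le _ _
    _ ≤ _ := add_le_add_right (hle Bᶜ) _

variable {κ : Type*}

theorem tsum_prod_apply {n : ℕ} (g : Fin n → κ → ℝ≥0∞) :
    ∑' k : Fin n → κ, ∏ i, g i (k i) = ∏ i, ∑' j, g i j := by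
  induction n with
  | zero => simp
  | succ n ih =>
    have hcons (z : κ × (Fin n → κ)) : ∏ i, g i (Fin.consEquiv (fun _ => κ) z i) =
        g 0 z.1 * ∏ i : Fin n, g i.succ (z.2 i) := by
      rw [Fin.prod_univ_succ]
      rfl
    rw [← (Fin.consEquiv fun _ : Fin (n + 1) => κ).tsum_eq, ENNReal.tsum_prod']
    simp only [hcons, ENNReal.tsum_mul_left, ih, ENNReal.tsum_mul_right, Fin.prod_univ_succ]

theorem tsum_ofReal_eq_one {f : κ → ℝ} (hf0 : ∀ k, 0 ≤ f k) (hf : HasSum f 1) :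
    ∑' k, ENNReal.ofReal (f k) = 1 := by
  rw [← ENNReal.ofReal_tsum_of_nonneg hf0 hf.summable, hf.tsum_eq, ENNReal.ofReal_one]

variable [DecidableEq κ]

theorem tsum_ite_ofReal {f : κ → ℝ} (hf0 : ∀ k, 0 ≤ f k) (hf : HasSum f 1) (j : κ) :
    ∑' k, (if k = j then 0 else ENNReal.ofReal (f k)) = ENNReal.ofReal (1 - f j) := by
  have h := ENNReal.tsum_eq_add_tsum_ite (f := fun k => ENNReal.ofReal (f k)) j
  rw [tsum_ofReal_eq_one hf0 hf] at h
  rw [ENNReal.ofReal_sub _ (hf0 j), ENNReal.ofReal_one, h,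
    ENNReal.add_sub_cancel_left ENNReal.ofReal_ne_top]
  exact tsum_congr fun k => by congr

variable {n : ℕ} {T U : Finset (Fin n)} {q : Fin n → κ → ℝ≥0∞}
  {w : κ → ℝ≥0∞}

theorem tsum_ite_filter_eq (hUT : U ⊆ T) (hq : ∀ i, ∑' k, q i k = 1) (hqT : ∀ i ∈ T, q i = w)
    (j : κ) :
    ∑' k : Fin n → κ, (if {i ∈ T | k i = j} = U then ∏ i, q i (k i) else 0) =
      w j ^ #U * (∑' k, if k = j then 0 else w k) ^ (#T - #U) := by
  have hiff (k : Fin n → κ) :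
      {i ∈ T | k i = j} = U ↔ ∀ i ∈ univ, i ∈ T → (k i = j ↔ i ∈ U) := by
    simp only [Finset.ext_iff, mem_filter, mem_univ, true_imp_iff]
    exact forall_congr' fun i => by have := @hUT i; tauto
  have hfactor (i : Fin n) : ∑' k, (if i ∈ T → (k = j ↔ i ∈ U) then q i k else 0) =
      if i ∈ U then w j else if i ∈ T then ∑' k, (if k = j then 0 else w k) else 1 := by
    by_cases hT : i ∈ T
    · by_cases hU : i ∈ U
      · simp only [hT, hU, hqT i hT, true_imp_iff, iff_true, if_true, tsum_ite_eq]
      · simp only [hT, hU, hqT i hT, true_imp_iff, iff_false, if_true, if_false, ite_not]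
    · simp only [hT, mt (@hUT i) hT, hq, false_imp_iff, if_true, if_false]
  have hprod (k : Fin n → κ) : (if {i ∈ T | k i = j} = U then ∏ i, q i (k i) else 0) =
      ∏ i, if i ∈ T → (k i = j ↔ i ∈ U) then q i (k i) else 0 := by
    rw [prod_ite_zero]
    congr 1
    exact propext (hiff k)
  simp only [hprod]
  rw [tsum_prod_apply fun i k => if i ∈ T → (k = j ↔ i ∈ U) then q i k else 0]
  have hsdiff : ({i | i ∉ U} : Finset (Fin n)).filter (· ∈ T) = T \ U := by
    ext i
    simp [and_comm]
  simp only [hfactor, prod_ite, prod_const, one_pow, mul_one, filter_univ_mem, hsdiff,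
    card_sdiff_of_subset hUT]

theorem tsum_ite_card_filter_eq (hq : ∀ i, ∑' k, q i k = 1) (hqT : ∀ i ∈ T, q i = w)
    (j : κ) (r : ℕ) :
    ∑' k : Fin n → κ, (if #{i ∈ T | k i = j} = r then ∏ i, q i (k i) else 0) =
      (#T).choose r * (w j ^ r * (∑' k, if k = j then 0 else w k) ^ (#T - r)) := by
  have hexpand (k : Fin n → κ) : (if #{i ∈ T | k i = j} = r then ∏ i, q i (k i) else 0) =
      ∑ U ∈ T.powersetCard r, if {i ∈ T | k i = j} = U then ∏ i, q i (k i) else 0 := by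
    simp only [sum_ite_eq, mem_powersetCard, filter_subset, true_and]
  simp only [hexpand]
  rw [Summable.tsum_finsetSum fun _ _ => ENNReal.summable, ← card_powersetCard, ← nsmul_eq_mul,
    ← sum_const]
  refine sum_congr rfl fun U hU => ?_
  rw [mem_powersetCard] at hU
  rw [tsum_ite_filter_eq hU.1 hq hqT, hU.2]

theorem tsum_ite_matches_eq_ofReal_matchProb {A : Type*} [DecidableEq A] {p : A → κ → ℝ}
    (hp0 : ∀ a k, 0 ≤ p a k) (hp : ∀ a, HasSum (p a) 1) (x : Fin (n + 1) → A) (r : ℕ) :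
    ∑' k : Fin (n + 1) → κ,
      (if #{i : Fin n | (x i.castSucc, k i.castSucc) = (x (Fin.last n), k (Fin.last n))} = r
        then ∏ i, ENNReal.ofReal (p (x i) (k i)) else 0) =
      ENNReal.ofReal (matchProb (p (x (Fin.last n))) r (visits (x (Fin.last n)) x)) := by
  set a := x (Fin.last n) with ha
  have hp1 (k : κ) : p a k ≤ 1 := le_hasSum (hp a) k fun j _ => hp0 a j
  have hsnoc (z : κ × (Fin n → κ)) : (Fin.snocEquiv fun _ : Fin (n + 1) => κ) z =
    (Fin.snoc z.2 z.1 : Fin (n + 1) → κ) := rfl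
  have hlast (j : κ) : ∑' k : Fin n → κ, (if #{i : Fin n | x i.castSucc = a ∧ k i = j} = r
      then (∏ i : Fin n, ENNReal.ofReal (p (x i.castSucc) (k i))) * ENNReal.ofReal (p a j)
      else 0) = ENNReal.ofReal ((visits a x).choose r *
        (p a j ^ (r + 1) * (1 - p a j) ^ (visits a x - r))) := by
    have h := tsum_ite_card_filter_eq (T := {i : Fin n | x i.castSucc = a})
      (q := fun i k => ENNReal.ofReal (p (x i.castSucc) k))
      (w := fun k => ENNReal.ofReal (p a k)) (fun i => tsum_ofReal_eq_one (hp0 _) (hp _))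
      (fun i hi => by rw [(mem_filter.1 hi).2]) j r
    rw [tsum_ite_ofReal (hp0 a) (hp a)] at h
    simp only [filter_filter] at h
    simp only [← ite_zero_mul, ENNReal.tsum_mul_right, h]
    rw [ENNReal.ofReal_mul (by positivity), ENNReal.ofReal_natCast,
      ENNReal.ofReal_mul (pow_nonneg (hp0 a j) _), ENNReal.ofReal_pow (hp0 a j),
      ENNReal.ofReal_pow (sub_nonneg.2 (hp1 j)), pow_succ]
    simp only [visits]
    ring
  rw [← (Fin.snocEquiv fun _ : Fin (n + 1) => κ).tsum_eq, ENNReal.tsum_prod']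
  simp only [hsnoc, Fin.snoc_castSucc (α := fun _ => κ), Fin.snoc_last (α := fun _ => κ),
    Prod.mk.injEq, Fin.prod_univ_castSucc, ← ha, hlast]
  rw [← ENNReal.ofReal_tsum_of_nonneg, tsum_mul_left, matchProb]
  · exact fun j => mul_nonneg (Nat.cast_nonneg _) (mul_nonneg (pow_nonneg (hp0 a j) _)
      (pow_nonneg (sub_nonneg.2 (hp1 j)) _))
  · exact summable_choose_mul_pow_succ_mul_one_sub_pow (hp0 a) hp1 (hp a).summable r _

end MatchingLetters

section RegimeSwitching

variable {A κ Ω : Type*} [MeasurableSpace Ω]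

/-- The regimes and the letters of `Z` at the times `0, …, n`. -/
def regimesLetters (Z : ℕ → Ω → A × κ) (n : ℕ) (ω : Ω) :
    (Fin (n + 1) → A) × (Fin (n + 1) → κ) :=
  (fun i => (Z i ω).1, fun i => (Z i ω).2)

variable {P : Measure Ω} {Z : ℕ → Ω → A × κ} {M : Matrix A A ℝ} {η : A → ℝ} {p : A → κ → ℝ}
  (hM : ∀ a b, 0 ≤ M a b) (hη : ∀ a, 0 ≤ η a) (hp0 : ∀ a k, 0 ≤ p a k)
  (hZ : ∀ (n : ℕ) (a : ℕ → A) (k : ℕ → κ),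
    P (⋂ i ∈ range (n + 1), {ω | Z i ω = (a i, k i)}) =
      ENNReal.ofReal ((η (a 0) * ∏ i ∈ range n, M (a i) (a (i + 1))) *
        ∏ i ∈ range (n + 1), p (a i) (k i)))
include hM hη hp0 hZ

theorem measure_regimesLetters_preimage_singleton {n : ℕ} (x : Fin (n + 1) → A)
    (k : Fin (n + 1) → κ) :
    P (regimesLetters Z n ⁻¹' {(x, k)}) =
      ENNReal.ofReal (pathWeight M η x) * ∏ i, ENNReal.ofReal (p (x i) (k i)) := by
  obtain ⟨a, ha⟩ : ∃ a : ℕ → A, ∀ i : Fin (n + 1), a i = x i :=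
    ⟨fun i => x (Fin.ofNat (n + 1) i), fun i => by simp⟩
  obtain ⟨b, hb⟩ : ∃ b : ℕ → κ, ∀ i : Fin (n + 1), b i = k i :=
    ⟨fun i => k (Fin.ofNat (n + 1) i), fun i => by simp⟩
  have hpre : regimesLetters Z n ⁻¹' {(x, k)} =
      ⋂ i ∈ range (n + 1), {ω | Z i ω = (a i, b i)} := by
    ext ω
    simp only [regimesLetters, Set.mem_preimage, Set.mem_singleton_iff, Prod.ext_iff, funext_iff,
      Set.mem_iInter, Set.mem_ofPred_eq, mem_range, ← forall_and, ← ha, ← hb]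
    exact Fin.forall_iff
  have hweight : η (a 0) * ∏ i ∈ range n, M (a i) (a (i + 1)) = pathWeight M η x := by
    rw [prod_range, pathWeight]
    exact congrArg₂ _ (congrArg η (ha 0)) <|
      prod_congr rfl fun i _ => congrArg₂ M (ha i.castSucc) (ha i.succ)
  rw [hpre, hZ, hweight, ENNReal.ofReal_mul (pathWeight_nonneg hM hη x),
    ENNReal.ofReal_prod_of_nonneg fun _ _ => hp0 _ _, prod_range]
  simp only [ha, hb]

variable [Fintype A]

theorem tsum_measure_regimesLetters (hM1 : M *ᵥ 1 = 1) (hη1 : ∑ a, η a = 1)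
    (hp : ∀ a, HasSum (p a) 1) (n : ℕ) :
    ∑' s, P (regimesLetters Z n ⁻¹' {s}) = 1 := by
  classical
  have hweight : ∑ x : Fin (n + 1) → A, pathWeight M η x = 1 := by
    simpa only [pathExp, mul_one] using pathExp_const (M := M) (η := η) ⟨hM, hM1⟩ ⟨hη, hη1⟩ n 1
  rw [ENNReal.tsum_prod', tsum_fintype]
  have hletters (x : Fin (n + 1) → A) : ∑' k : Fin (n + 1) → κ,
      ∏ i, ENNReal.ofReal (p (x i) (k i)) = 1 := by
    rw [tsum_prod_apply fun i k => ENNReal.ofReal (p (x i) k)]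
    exact prod_eq_one fun i _ => tsum_ofReal_eq_one (hp0 _) (hp _)
  simp only [measure_regimesLetters_preimage_singleton hM hη hp0 hZ, ENNReal.tsum_mul_left,
    hletters, mul_one]
  rw [← ENNReal.ofReal_sum_of_nonneg fun x _ => pathWeight_nonneg hM hη x, hweight,
    ENNReal.ofReal_one]

variable [IsProbabilityMeasure P] [DecidableEq A] [DecidableEq κ] [Countable κ]

theorem toReal_measure_matches_eq_pathExp (hM1 : M *ᵥ 1 = 1) (hη1 : ∑ a, η a = 1)
    (hp : ∀ a, HasSum (p a) 1) (r n : ℕ) :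
    (P {ω | (∑ i ∈ range n, if Z i ω = Z n ω then 1 else 0 : ℕ) = r}).toReal =
      pathExp M η n fun x => matchProb (p (x (Fin.last n))) r (visits (x (Fin.last n)) x) := by
  set B : Set ((Fin (n + 1) → A) × (Fin (n + 1) → κ)) := {s |
    #{i : Fin n | (s.1 i.castSucc, s.2 i.castSucc) = (s.1 (Fin.last n), s.2 (Fin.last n))} = r}
  have hpre : {ω | (∑ i ∈ range n, if Z i ω = Z n ω then 1 else 0 : ℕ) = r} =
      regimesLetters Z n ⁻¹' B := by
    ext ω
    rw [Set.mem_ofPred_eq, sum_range, ← card_filter]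
    rfl
  have hpath (x : Fin (n + 1) → A) :
      ∑' k, B.indicator (fun s => P (regimesLetters Z n ⁻¹' {s})) (x, k) =
        ENNReal.ofReal (pathWeight M η x *
          matchProb (p (x (Fin.last n))) r (visits (x (Fin.last n)) x)) := by
    rw [ENNReal.ofReal_mul (pathWeight_nonneg hM hη x),
      ← tsum_ite_matches_eq_ofReal_matchProb hp0 hp, ← ENNReal.tsum_mul_left]
    refine tsum_congr fun k => ?_
    rw [Set.indicator_apply, measure_regimesLetters_preimage_singleton hM hη hp0 hZ, mul_ite,
      mul_zero]
    rfl
  have hnonneg (x : Fin (n + 1) → A) : 0 ≤ pathWeight M η x *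
      matchProb (p (x (Fin.last n))) r (visits (x (Fin.last n)) x) :=
    mul_nonneg (pathWeight_nonneg hM hη x)
      (matchProb_nonneg (hp0 _) (fun k => le_hasSum (hp _) k fun j _ => hp0 _ j) _ _)
  rw [hpre, measure_preimage_of_tsum_eq_one
      (tsum_measure_regimesLetters hM hη hp0 hZ hM1 hη1 hp n),
    tsum_subtype B fun s => P (regimesLetters Z n ⁻¹' {s}), ENNReal.tsum_prod', tsum_fintype]
  simp only [hpath]
  rw [← ENNReal.ofReal_sum_of_nonneg fun x _ => hnonneg x,
    ENNReal.toReal_ofReal (sum_nonneg fun x _ => hnonneg x), pathExp]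

end RegimeSwitching

section RegularlyVaryingCountingFunction

variable {κ : Type*} {q : κ → ℝ} {α D c : ℝ} {W : ℝ → ℝ}

theorem eventually_pos_of_tendsto_countingFn_div (hD : 0 < D)
    (hqW : Tendsto (fun x => countingFn q (1 / x) / W x) atTop (𝓝 D)) :
    ∀ᶠ x in atTop, 0 < countingFn q (1 / x) ∧ 0 < W x := by
  filter_upwards [hqW.eventually_const_lt hD] with x hx
  exact (div_pos_iff.1 hx).resolve_right fun h => h.1.not_ge (countingFn_nonneg q _)

theorem monotoneOn_countingFn_one_div (hq0 : ∀ k, 0 ≤ q k) (hq : Summable q) :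
    MonotoneOn (fun x => countingFn q (1 / x)) (Set.Ioi 0) := fun _ hx _ hy hxy =>
  antitoneOn_countingFn hq0 hq (Set.mem_Ioi.2 (one_div_pos.2 hy))
    (Set.mem_Ioi.2 (one_div_pos.2 hx)) (one_div_le_one_div_of_le hx hxy)

theorem RegularlyVarying.tendsto_atTop_of_countingFn (hW : RegularlyVarying α W) (hα : 0 < α)
    (hq0 : ∀ k, 0 ≤ q k) (hq : Summable q) (hD : 0 < D)
    (hqW : Tendsto (fun x => countingFn q (1 / x) / W x) atTop (𝓝 D)) :
    Tendsto W atTop atTop := by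
  have hpos := eventually_pos_of_tendsto_countingFn_div hD hqW
  have hV := (hW.of_tendsto_div hqW hD.ne').tendsto_atTop_of_monotoneOn hα
    (monotoneOn_countingFn_one_div hq0 hq) (hpos.mono fun x hx => hx.1)
  refine (hV.atTop_mul_pos (inv_pos.2 hD) (hqW.inv₀ hD.ne')).congr' ?_
  filter_upwards [hpos] with x hx
  rw [inv_div, mul_div_cancel₀ _ hx.1.ne']

theorem RegularlyVarying.tendsto_div_ratioFilter_of_countingFn (hW : RegularlyVarying α W)
    (hq0 : ∀ k, 0 ≤ q k) (hq : Summable q) (hD : 0 < D)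
    (hqW : Tendsto (fun x => countingFn q (1 / x) / W x) atTop (𝓝 D)) (hc : 0 < c) :
    Tendsto (fun z : ℕ × ℕ => W z.2 / W z.1) (ratioFilter c) (𝓝 (c ^ α)) :=
  hW.tendsto_div_of_tendsto_monotoneOn_div (monotoneOn_countingFn_one_div hq0 hq)
    ((eventually_pos_of_tendsto_countingFn_div hD hqW).mono fun _ h => h.1) hqW hD.ne'
    (tendsto_natCast_atTop_atTop.comp (tendsto_fst_ratioFilter c)) hc (tendsto_div_ratioFilter c)

end RegularlyVaryingCountingFunction

section RegimeSwitchingAsymptotics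

theorem tendsto_pathExp_matchProb_mul_div {A κ : Type*} [Fintype A] [DecidableEq A] [Countable κ]
    {M : Matrix A A ℝ} {π η : A → ℝ} (hM : M ∈ Matrix.rowStochastic ℝ A)
    (hπ : π ∈ stdSimplex ℝ A) (hη : η ∈ stdSimplex ℝ A) (hstat : π ᵥ* M = π) {k : ℕ}
    (hk : ∀ a b, 0 < (M ^ k) a b) (hπpos : ∀ a, 0 < π a) {p : A → κ → ℝ}
    (hp0 : ∀ a k, 0 ≤ p a k) (hp : ∀ a, HasSum (p a) 1) {α : ℝ} (hα : 0 < α) (hα1 : α < 1)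
    {W : ℝ → ℝ} (hW : RegularlyVarying α W) {C : A → ℝ} (hC : ∃ a, 0 < C a)
    (hpW : ∀ a, Tendsto (fun x => countingFn (p a) (1 / x) / W x) atTop (𝓝 (C a))) (r : ℕ) :
    Tendsto (fun n : ℕ => (pathExp M η n fun x =>
        matchProb (p (x (Fin.last n))) r (visits (x (Fin.last n)) x)) * (n / W n)) atTop
      (𝓝 (∑ a, π a ^ α * (C a * (α * Real.Gamma (r + 1 - α) / r.factorial)))) := by
  obtain ⟨b, hb⟩ := hC
  have hpos : ∀ᶠ x in atTop, 0 < W x :=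
    (eventually_pos_of_tendsto_countingFn_div hb (hpW b)).mono fun x hx => hx.2
  have hratio (a : A) := tendsto_matchProb_mul_div_ratioFilter (hp0 a)
    (fun k => le_hasSum (hp a) k fun j _ => hp0 a j) (hp a).summable hα hα1 hW hpos (hpW a)
    (hπpos a) (hW.tendsto_div_ratioFilter_of_countingFn (hp0 b) (hp b).summable hb (hpW b)
      (hπpos a)) r
  have hWtop : Tendsto (fun n : ℕ => W n) atTop atTop :=
    (hW.tendsto_atTop_of_countingFn hα (hp0 b) (hp b).summable hb (hpW b)).comp
      tendsto_natCast_atTop_atTop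
  have hR : Tendsto (fun n : ℕ => (n / W n) / n) atTop (𝓝 0) := by
    refine (tendsto_inv_atTop_zero.comp hWtop).congr' ?_
    filter_upwards [eventually_ne_atTop 0] with n hn
    simp only [Function.comp_apply]
    field_simp
  have hbound : ∀ᶠ n : ℕ in atTop, ∀ a m, |matchProb (p a) r m * n / W n| ≤ n / W n := by
    filter_upwards [tendsto_natCast_atTop_atTop.eventually hpos] with n hn a m
    exact abs_matchProb_mul_div_le (hp0 a) (hp a) r m n.cast_nonneg hn.le
  have h := tendsto_pathExp_visits_last hM hπ hη hstat hk hratio hR hbound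
  have hlim : (π ⬝ᵥ fun a => π a ^ (α - 1) * (C a * (α * Real.Gamma (r + 1 - α) / r.factorial))) =
      ∑ a, π a ^ α * (C a * (α * Real.Gamma (r + 1 - α) / r.factorial)) :=
    sum_congr rfl fun a _ => by
      rw [← mul_assoc, mul_comm (π a), ← Real.rpow_add_one (hπpos a).ne', sub_add_cancel]
  rw [hlim] at h
  refine h.congr fun n => ?_
  rw [mul_comm, ← pathExp_const_mul]
  simp only [mul_div_assoc, mul_comm]

theorem mpow_eq_pow {A : Type*} [Fintype A] [DecidableEq A] (Q : A → A → ℝ) (t : ℕ) :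
    mpow Q t = Matrix.of Q ^ t := by
  induction t with
  | zero =>
    ext a b
    exact (Matrix.one_apply ..).symm
  | succ t ih =>
    ext a b
    rw [pow_succ', ← ih]
    rfl

theorem regime_switching_asymptotics_general {A κ : Type*} [Fintype A] [DecidableEq A]
    [Countable κ] [DecidableEq κ] {Ω : Type*} [MeasurableSpace Ω] (P : Measure Ω)
    [IsProbabilityMeasure P] (Z : ℕ → Ω → A × κ) (Q : A → A → ℝ) (π η : A → ℝ)
    (hQnn : ∀ x y, 0 ≤ Q x y) (hQ : ∀ x, ∑ y, Q x y = 1)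
    (hprim : ∃ t : ℕ, ∀ a b, 0 < mpow Q t a b)
    (hπpos : ∀ x, 0 < π x) (hπsum : ∑ x, π x = 1)
    (hstat : ∀ x, ∑ y, π y * Q y x = π x)
    (hηnn : ∀ a, 0 ≤ η a) (hηsum : ∑ a, η a = 1)
    (p : A → κ → ℝ) (hpnn : ∀ a k, 0 ≤ p a k) (hp : ∀ a, HasSum (p a) 1)
    (hZ : ∀ (n : ℕ) (a : ℕ → A) (k : ℕ → κ),
      P (⋂ i ∈ range (n + 1), {ω | Z i ω = (a i, k i)}) =
        ENNReal.ofReal ((η (a 0) * ∏ i ∈ range n, Q (a i) (a (i + 1))) *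
          ∏ i ∈ range (n + 1), p (a i) (k i)))
    (α : ℝ) (hα : α ∈ Set.Ioo (0 : ℝ) 1) (ℓ : ℝ → ℝ) (hsv : SlowlyVarying ℓ)
    (C : A → ℝ) (hC : ∃ a, 0 < C a)
    (hRV : ∀ a, Tendsto (fun ε => countingFn (p a) ε / (ε ^ (-α) * ℓ (1 / ε))) (𝓝[>] 0)
      (𝓝 (C a)))
    (r : ℕ) :
    Tendsto (fun n : ℕ =>
        (P {ω | (∑ i ∈ range n, if Z i ω = Z n ω then 1 else 0 : ℕ) = r}).toReal /
          ((n : ℝ) ^ (-(1 - α)) * ℓ n))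
      atTop (𝓝 (∑ a, π a ^ α * (C a * (α * Real.Gamma (r + 1 - α) / r.factorial)))) := by
  obtain ⟨t, ht⟩ := hprim
  rw [mpow_eq_pow] at ht
  have hQ1 : Matrix.of Q *ᵥ 1 = 1 := funext fun a => by simpa [Matrix.mulVec, dotProduct] using hQ a
  have hmatch := tendsto_pathExp_matchProb_mul_div (M := Matrix.of Q) ⟨hQnn, hQ1⟩
    ⟨fun a => (hπpos a).le, hπsum⟩ ⟨hηnn, hηsum⟩ (funext hstat) ht hπpos hpnn hp hα.1 hα.2
    (hsv.regularlyVarying_rpow_mul α) hC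
    (fun a => tendsto_comp_one_div_div_rpow_mul (hRV a)) r
  refine hmatch.congr' ?_
  filter_upwards [eventually_gt_atTop 0] with n hn
  have hn' : (0 : ℝ) < n := Nat.cast_pos.2 hn
  rw [toReal_measure_matches_eq_pathExp (M := Matrix.of Q) hQnn hηnn hpnn hZ hQ1 hηsum hp, neg_sub,
    Real.rpow_sub_one hn'.ne']
  field_simp

end RegimeSwitchingAsymptotics

/-- Theorem 5.1, case α ∈ (0,1): for the regime switching model driven by
an aperiodic irreducible Markov chain on a finite set `A` with stationary distribution `π`
and initial distribution `η`, if `P ∈ RV_α(C, ℓ)` with `α ∈ (0,1)` and `ℓ` locally bounded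
away from `0` and `∞` on `[1,∞)`, then for all `r ≥ 0`,
`P_η{𝓛_n = r}/(n^{−(1−α)}ℓ(n)) → Σ_a π_a^α C(a) αΓ(r+1−α)/r!`. (Indexed from 0.) -/
theorem regime_switching_asymptotics {A : Type*} [Fintype A] [Nonempty A] [DecidableEq A]
    {Ω : Type*} [MeasurableSpace Ω] (P : Measure Ω) [IsProbabilityMeasure P]
    (Z : ℕ → Ω → A × ℕ)
    (Q : A → A → ℝ) (π η : A → ℝ)
    (hQnn : ∀ x y, 0 ≤ Q x y) (hQ : ∀ x, ∑ y, Q x y = 1)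
    (hprim : ∃ t : ℕ, ∀ a b, 0 < mpow Q t a b)
    (hπpos : ∀ x, 0 < π x) (hπsum : ∑ x, π x = 1)
    (hstat : ∀ x, ∑ y, π y * Q y x = π x)
    (hηnn : ∀ a, 0 ≤ η a) (hηsum : ∑ a, η a = 1)
    (p : A → ℕ → ℝ) (hpnn : ∀ a k, 0 ≤ p a k) (hp : ∀ a, HasSum (p a) 1)
    (hZ : ∀ (n : ℕ) (a : ℕ → A) (k : ℕ → ℕ),
      P (⋂ i ∈ Finset.range (n + 1), {ω | Z i ω = (a i, k i)}) =
        ENNReal.ofReal ((η (a 0) * ∏ i ∈ Finset.range n, Q (a i) (a (i + 1))) *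
          ∏ i ∈ Finset.range (n + 1), p (a i) (k i)))
    (α : ℝ) (hα : α ∈ Set.Ioo (0 : ℝ) 1)
    (ℓ : ℝ → ℝ) (hsv : SlowlyVarying ℓ)
    (hbdd : ∀ b : ℝ, 1 ≤ b → ∃ m M : ℝ, 0 < m ∧
      ∀ x ∈ Set.Icc (1 : ℝ) b, m ≤ ℓ x ∧ ℓ x ≤ M)
    (C : A → ℝ) (hCnn : ∀ a, 0 ≤ C a) (hCne : ∃ a, C a ≠ 0)
    (hRV : ∀ a : A, Tendsto (fun ε : ℝ => nuR p a ε / (ε ^ (-α) * ℓ (1 / ε)))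
      (nhdsWithin 0 (Set.Ioi 0)) (nhds (C a)))
    (r : ℕ) :
    Tendsto (fun n : ℕ =>
        (P {ω | (∑ i ∈ Finset.range n, if Z i ω = Z n ω then 1 else 0 : ℕ) = r}).toReal /
          ((n : ℝ) ^ (-(1 - α)) * ℓ n))
      atTop (nhds (∑ a, π a ^ α * (C a *
        (α * Real.Gamma (r + 1 - α) / (r.factorial : ℝ))))) := by
  obtain ⟨a, ha⟩ := hCne
  exact regime_switching_asymptotics_general P Z Q π η hQnn hQ hprim hπpos hπsum hstat hηnn hηsum
    p hpnn hp hZ α hα ℓ hsv C ⟨a, (hCnn a).lt_of_ne' ha⟩ hRV r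
end
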